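/- arXiv:1212.2551 — 3 statements merged into one kernel-verified Lean document; each statement's English description precedes it below -/
import Mathlib

section
/- Let S ⊂ ℝ^8 be the set of 240 minimal vectors of the root lattice E_8, namely the 112 vectors (σ e_i + τ e_j)/√2 with 1 ≤ i < j ≤ 8 and σ, τ ∈ {+1, −1}, together with the 128 vectors (1/(2√2))(ε_1, …, ε_8) with ε_i ∈ {+1, −1} and ε_1 ε_2 ⋯ ε_8 = 1. Then S is redundantly extreme: for every x₀ ∈ S, the configuration S ∖ {x₀, −x₀} is perfect and eutactic. -/
open scoped RealInnerProductSpace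
open Metric MeasureTheory

noncomputable section

abbrev Euc (n : ℕ) := EuclideanSpace ℝ (Fin n)

/-- The rank-one symmetric map `P_x : y ↦ ⟪y, x⟫ • x`. -/
def projMap {F : Type*} [NormedAddCommGroup F] [InnerProductSpace ℝ F] (x : F) :
    F →ₗ[ℝ] F where
  toFun y := (⟪y, x⟫) • x
  map_add' y z := by simp [inner_add_left, add_smul]
  map_smul' c y := by simp [real_inner_smul_left, mul_smul]

/-- A configuration is perfect if the maps `P_x`, `x ∈ S`, span the symmetric maps. -/
def IsPerfectCfg {F : Type*} [NormedAddCommGroup F] [InnerProductSpace ℝ F]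
    (S : Set F) : Prop :=
  ∀ T : F →ₗ[ℝ] F, T.IsSymmetric → T ∈ Submodule.span ℝ (projMap '' S)

/-- A configuration is eutactic if `Id = Σ_{x∈S} υ_x P_x` with `υ_x > 0`, `υ_x = υ_{-x}`. -/
def IsEutacticCfg {F : Type*} [NormedAddCommGroup F] [InnerProductSpace ℝ F]
    (S : Set F) : Prop :=
  ∃ υ : F → ℝ, (∀ x ∈ S, 0 < υ x) ∧ (∀ x ∉ S, υ x = 0) ∧
    (Function.support υ).Finite ∧ (∀ x, υ x = υ (-x)) ∧
    ∑ᶠ x, υ x • projMap x = (LinearMap.id : F →ₗ[ℝ] F)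

/-- A configuration is semi-eutactic if `Id = Σ_{x∈S} υ_x P_x` with `υ_x ≥ 0`, `υ_x = υ_{-x}`. -/
def IsSemiEutacticCfg {F : Type*} [NormedAddCommGroup F] [InnerProductSpace ℝ F]
    (S : Set F) : Prop :=
  ∃ υ : F → ℝ, (∀ x ∈ S, 0 ≤ υ x) ∧ (∀ x ∉ S, υ x = 0) ∧
    (Function.support υ).Finite ∧ (∀ x, υ x = υ (-x)) ∧
    ∑ᶠ x, υ x • projMap x = (LinearMap.id : F →ₗ[ℝ] F)

/-- A configuration is extreme if it is perfect and eutactic. -/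
def IsExtremeCfg {F : Type*} [NormedAddCommGroup F] [InnerProductSpace ℝ F]
    (S : Set F) : Prop :=
  IsPerfectCfg S ∧ IsEutacticCfg S

/-- Hilbert–Schmidt (Frobenius) norm of a linear map on `ℝ^n`. -/
def frobNorm {n : ℕ} (T : Euc n →ₗ[ℝ] Euc n) : ℝ :=
  Real.sqrt (∑ j, ∑ i, (T (EuclideanSpace.single j 1) i) ^ 2)

/-- The lattice `T ℤ^n` as a set of points. -/
def latticeSet {n : ℕ} (T : Euc n →ₗ[ℝ] Euc n) : Set (Euc n) :=
  {v | ∃ z : Fin n → ℤ, v = T (∑ i, (z i : ℝ) • EuclideanSpace.single i 1)}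

/-- A set is an (n-dimensional) lattice if it is `T ℤ^n` for an invertible `T`. -/
def IsLattice {n : ℕ} (Λ : Set (Euc n)) : Prop :=
  ∃ T : Euc n →ₗ[ℝ] Euc n, LinearMap.det T ≠ 0 ∧ Λ = latticeSet T

/-- The determinant `d(Λ) = |det T|` of a lattice. -/
def latDet {n : ℕ} (Λ : Set (Euc n)) : ℝ :=
  sInf {d | ∃ T : Euc n →ₗ[ℝ] Euc n, Λ = latticeSet T ∧ d = |LinearMap.det T|}

/-- The metric `δ(Λ, Λ') = inf ‖T - T'‖` on the space of lattices. -/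
def latDist {n : ℕ} (Λ Λ' : Set (Euc n)) : ℝ :=
  sInf {d | ∃ T T' : Euc n →ₗ[ℝ] Euc n,
    Λ = latticeSet T ∧ Λ' = latticeSet T' ∧ d = frobNorm (T - T')}

/-- The minimal norm `m(Λ)`. -/
def minNorm {n : ℕ} (Λ : Set (Euc n)) : ℝ :=
  sInf {r | ∃ x ∈ Λ, x ≠ 0 ∧ r = ‖x‖ ^ 2}

/-- The set `S(Λ)` of minimal vectors of a lattice. -/
def minVecs {n : ℕ} (Λ : Set (Euc n)) : Set (Euc n) :=
  {x | x ∈ Λ ∧ x ≠ 0 ∧ ‖x‖ ^ 2 = minNorm Λ}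

/-- An origin-symmetric convex body. -/
structure IsSymCB {n : ℕ} (K : Set (Euc n)) : Prop where
  convex : Convex ℝ K
  compact : IsCompact K
  nonempty_interior : (interior K).Nonempty
  symm : -K = K

/-- A lattice is admissible for a body if it meets the interior only at the origin. -/
def IsAdmissible {n : ℕ} (Λ K : Set (Euc n)) : Prop :=
  Λ ∩ interior K ⊆ {0}

/-- The critical determinant `d_K`. -/
def critDet {n : ℕ} (K : Set (Euc n)) : ℝ :=
  sInf {d | ∃ Λ : Set (Euc n), IsLattice Λ ∧ IsAdmissible Λ K ∧ d = latDet Λ}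

/-- A critical lattice of `K`: an admissible lattice attaining the critical determinant. -/
def IsCriticalLattice {n : ℕ} (Λ K : Set (Euc n)) : Prop :=
  IsLattice Λ ∧ IsAdmissible Λ K ∧ latDet Λ = critDet K

/-- The optimal lattice packing fraction `φ(K) = 2⁻ⁿ vol(K) / d_K`. -/
def packFrac {n : ℕ} (K : Set (Euc n)) : ℝ :=
  (volume K).toReal / (2 ^ n * critDet K)

/-- The closed unit ball `Bⁿ`. -/
def unitBall (n : ℕ) : Set (Euc n) := Metric.closedBall 0 1

/-- The support function of a body. -/
def suppFn {n : ℕ} (K : Set (Euc n)) (x : Euc n) : ℝ :=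
  sSup ((fun y => ⟪x, y⟫) '' K)

/-- The radial function of a body. -/
def radFn {n : ℕ} (K : Set (Euc n)) (x : Euc n) : ℝ :=
  sSup {t : ℝ | 0 ≤ t ∧ t • x ∈ K}

/-- The 240 minimal vectors of the root lattice `E₈`: the 112 vectors `(σeᵢ + τeⱼ)/√2`
with `i ≠ j`, `σ, τ ∈ {±1}`, together with the 128 vectors `(1/(2√2))(ε₁, …, ε₈)` with
`εᵢ ∈ {±1}` and `ε₁ε₂⋯ε₈ = 1`. -/
def cfgE8 : Set (Euc 8) :=
  {v | ∃ i j : Fin 8, i ≠ j ∧ ∃ σ τ : ℝ, (σ = 1 ∨ σ = -1) ∧ (τ = 1 ∨ τ = -1) ∧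
      v = (Real.sqrt 2)⁻¹ •
        (σ • EuclideanSpace.single i 1 + τ • EuclideanSpace.single j 1)} ∪
  {v | ∃ ε : Fin 8 → ℝ, (∀ i, ε i = 1 ∨ ε i = -1) ∧ (∏ i, ε i) = 1 ∧
      v = (2 * Real.sqrt 2)⁻¹ • ∑ i, ε i • EuclideanSpace.single i 1}

/-!
Write `P_x` for `projMap x`. The minimal vectors of `E₈` form a spherical 5-design: the quartic form
`∑ ⟪x, y⟫ ^ 4` is a multiple of `‖y‖ ^ 4`, because the `∑ y i ^ 4` terms contributed by the vectors
`(± eᵢ ± eⱼ) / √2` and by the sign vectors cancel in dimension 8. Polarizing gives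
`∑ ⟪x, y⟫ ^ 2 P_x = c ‖y‖ ^ 2 Id + 2 c P_y`, and summing over an orthonormal basis
`∑ P_x = c (n + 2) Id`. Deleting `± x₀` only subtracts multiples of `P_{x₀}`, so when `c > 1` a
positive combination of the two identities shows that the remaining vectors are eutactic. Their span
then contains `Id` and `P_{x₀}`, hence every `P_y`, so they are also perfect. For `E₈`, `c = 3`.
-/

section RankOne

variable {F : Type*} [NormedAddCommGroup F] [InnerProductSpace ℝ F]

lemma projMap_apply (x y : F) : projMap x y = ⟪y, x⟫ • x := rfl

lemma projMap_neg (x : F) : projMap (-x) = projMap x := by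
  ext y
  simp [projMap_apply]

lemma inner_projMap_self (x y : F) : ⟪projMap x y, y⟫ = ⟪x, y⟫ ^ 2 := by
  rw [projMap_apply, real_inner_smul_left, real_inner_comm, sq]

lemma isSymmetric_projMap (x : F) : (projMap x).IsSymmetric := fun y z => by
  rw [projMap_apply, projMap_apply, real_inner_smul_left, real_inner_smul_right,
    real_inner_comm z x, mul_comm]

lemma sum_projMap_orthonormalBasis {ι : Type*} [Fintype ι] (b : OrthonormalBasis ι ℝ F) :
    ∑ i, projMap (b i) = LinearMap.id := by
  ext y
  simpa [projMap_apply, real_inner_comm] using b.sum_repr' y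

lemma eq_of_forall_inner_map_self_eq {T U : F →ₗ[ℝ] F} (hT : T.IsSymmetric) (hU : U.IsSymmetric)
    (h : ∀ y, ⟪T y, y⟫ = ⟪U y, y⟫) : T = U := by
  rw [← sub_eq_zero, ← (hT.sub hU).inner_map_self_eq_zero]
  intro y
  rw [LinearMap.sub_apply, inner_sub_left, h, sub_self]

lemma isSymmetric_sum_smul_projMap {ι : Type*} (s : Finset ι) (w : ι → ℝ) (v : ι → F) :
    (∑ i ∈ s, w i • projMap (v i)).IsSymmetric :=
  LinearMap.isSymmetric_sum s fun i _ => (isSymmetric_projMap (v i)).smul rfl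

lemma inner_sum_smul_projMap_self {ι : Type*} (s : Finset ι) (w : ι → ℝ) (v : ι → F) (y : F) :
    ⟪(∑ i ∈ s, w i • projMap (v i)) y, y⟫ = ∑ i ∈ s, w i * ⟪v i, y⟫ ^ 2 := by
  simp only [LinearMap.sum_apply, LinearMap.smul_apply, sum_inner, real_inner_smul_left,
    inner_projMap_self]

lemma exists_eq_sum_smul_projMap [FiniteDimensional ℝ F] {T : F →ₗ[ℝ] F} (hT : T.IsSymmetric) :
    T = ∑ i, hT.eigenvalues rfl i • projMap (hT.eigenvectorBasis rfl i) := by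
  ext y
  rw [← (hT.eigenvectorBasis rfl).sum_repr' (T y)]
  simp only [LinearMap.sum_apply, LinearMap.smul_apply, projMap_apply, smul_smul]
  refine Finset.sum_congr rfl fun i _ => ?_
  rw [← hT, hT.apply_eigenvectorBasis, real_inner_comm]
  simp [real_inner_smul_right]

lemma isPerfectCfg_of_projMap_mem_span [FiniteDimensional ℝ F] {S : Set F}
    (h : ∀ y, projMap y ∈ Submodule.span ℝ (projMap '' S)) : IsPerfectCfg S := by
  intro T hT
  rw [exists_eq_sum_smul_projMap hT]
  exact Submodule.sum_mem _ fun i _ => Submodule.smul_mem _ _ (h _)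

lemma sum_smul_projMap_mem_span {S : Finset F} (w : F → ℝ) :
    ∑ x ∈ S, w x • projMap x ∈ Submodule.span ℝ (projMap '' (S : Set F)) :=
  Submodule.sum_mem _ fun _ hx =>
    Submodule.smul_mem _ _ (Submodule.subset_span (Set.mem_image_of_mem _ hx))

lemma isEutacticCfg_of_sum_smul_projMap {S : Finset F} (w : F → ℝ) (hw_pos : ∀ x ∈ S, 0 < w x)
    (hS : ∀ x ∈ S, -x ∈ S) (hw_even : ∀ x, w (-x) = w x)
    (hsum : ∑ x ∈ S, w x • projMap x = LinearMap.id) : IsEutacticCfg (S : Set F) := by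
  classical
  have hsupp : Function.support ((S : Set F).indicator w) ⊆ S := Set.support_indicator_subset
  refine ⟨(S : Set F).indicator w, fun x hx => ?_, fun _ hx => Set.indicator_of_notMem hx w,
    S.finite_toSet.subset hsupp, fun x => ?_, ?_⟩
  · rw [Set.indicator_of_mem hx]
    exact hw_pos x hx
  · have hmem : -x ∈ S ↔ x ∈ S := ⟨fun hx => neg_neg x ▸ hS _ hx, hS x⟩
    simp only [Set.indicator_apply, Finset.mem_coe, hmem, hw_even]
  · have hsupp' : (Function.support fun x => (S : Set F).indicator w x • projMap x) ⊆ S :=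
      (Function.support_smul_subset_left _ _).trans hsupp
    rw [finsum_eq_sum_of_support_subset _ hsupp', ← hsum]
    refine Finset.sum_congr rfl fun x hx => ?_
    rw [Set.indicator_of_mem (Finset.mem_coe.2 hx)]

lemma IsEutacticCfg.id_mem_span {S : Set F} (h : IsEutacticCfg S) :
    (LinearMap.id : F →ₗ[ℝ] F) ∈ Submodule.span ℝ (projMap '' S) := by
  obtain ⟨υ, -, hυ_zero, -, -, hsum⟩ := h
  rw [← hsum]
  refine finsum_induction (· ∈ Submodule.span ℝ (projMap '' S)) (zero_mem _)
    (fun _ _ => add_mem) fun x => ?_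
  by_cases hx : x ∈ S
  · exact Submodule.smul_mem _ _ (Submodule.subset_span (Set.mem_image_of_mem _ hx))
  · rw [hυ_zero x hx, zero_smul]
    exact zero_mem _

end RankOne

/-- `S` is an antipodal spherical 5-design, in Venkov's form: unit vectors, closed under negation,
whose fourth moment is isotropic. In dimension `n` one has `c = |S| / (n * (n + 2))`; the factor `3`
makes `∑ x ∈ S, ⟪x, y⟫ ^ 2 * ⟪x, z⟫ ^ 2 = c` for orthonormal `y`, `z`. -/
structure IsFiveDesign {F : Type*} [NormedAddCommGroup F] [InnerProductSpace ℝ F]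
    (S : Finset F) (c : ℝ) : Prop where
  norm_eq_one : ∀ x ∈ S, ‖x‖ = 1
  neg_mem : ∀ x ∈ S, -x ∈ S
  sum_inner_pow_four : ∀ y, ∑ x ∈ S, ⟪x, y⟫ ^ 4 = 3 * c * ‖y‖ ^ 4

namespace IsFiveDesign

variable {F : Type*} [NormedAddCommGroup F] [InnerProductSpace ℝ F] {S : Finset F} {c : ℝ}

lemma sum_inner_sq_mul_inner_sq (h : IsFiveDesign S c) (y z : F) :
    ∑ x ∈ S, ⟪x, y⟫ ^ 2 * ⟪x, z⟫ ^ 2 = c * (‖y‖ ^ 2 * ‖z‖ ^ 2 + 2 * ⟪y, z⟫ ^ 2) := by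
  have polarization : ∑ x ∈ S, ⟪x, y⟫ ^ 2 * ⟪x, z⟫ ^ 2 =
      (∑ x ∈ S, ⟪x, y + z⟫ ^ 4 + ∑ x ∈ S, ⟪x, y - z⟫ ^ 4
        - 2 * ∑ x ∈ S, ⟪x, y⟫ ^ 4 - 2 * ∑ x ∈ S, ⟪x, z⟫ ^ 4) / 12 := by
    simp only [Finset.mul_sum, ← Finset.sum_add_distrib, ← Finset.sum_sub_distrib,
      Finset.sum_div]
    refine Finset.sum_congr rfl fun x _ => ?_
    rw [inner_add_right, inner_sub_right]
    ring
  have pow_four (v : F) : ‖v‖ ^ 4 = (‖v‖ ^ 2) ^ 2 := by ring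
  simp only [polarization, h.sum_inner_pow_four, pow_four, norm_add_sq_real, norm_sub_sq_real]
  ring

lemma sum_inner_sq_smul_projMap (h : IsFiveDesign S c) (y : F) :
    ∑ x ∈ S, ⟪x, y⟫ ^ 2 • projMap x =
      (c * ‖y‖ ^ 2) • (LinearMap.id : F →ₗ[ℝ] F) + (2 * c) • projMap y := by
  refine eq_of_forall_inner_map_self_eq (isSymmetric_sum_smul_projMap _ _ _)
    ((LinearMap.IsSymmetric.id.smul rfl).add ((isSymmetric_projMap y).smul rfl)) fun z => ?_
  rw [inner_sum_smul_projMap_self, h.sum_inner_sq_mul_inner_sq, LinearMap.add_apply,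
    LinearMap.smul_apply, LinearMap.smul_apply, LinearMap.id_apply, inner_add_left,
    real_inner_smul_left, real_inner_smul_left, inner_projMap_self, real_inner_self_eq_norm_sq]
  ring

lemma sum_projMap [FiniteDimensional ℝ F] (h : IsFiveDesign S c) :
    ∑ x ∈ S, projMap x = (c * (Module.finrank ℝ F + 2)) • (LinearMap.id : F →ₗ[ℝ] F) := by
  let b := stdOrthonormalBasis ℝ F
  calc ∑ x ∈ S, projMap x
      = ∑ x ∈ S, ∑ i, ⟪x, b i⟫ ^ 2 • projMap x := by
        refine Finset.sum_congr rfl fun x hx => ?_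
        rw [← Finset.sum_smul, b.sum_sq_inner_left, h.norm_eq_one x hx, one_pow, one_smul]
    _ = ∑ i, (c • (LinearMap.id : F →ₗ[ℝ] F) + (2 * c) • projMap (b i)) := by
        rw [Finset.sum_comm]
        simp only [h.sum_inner_sq_smul_projMap, b.norm_eq_one, one_pow, mul_one]
    _ = _ := by
        rw [Finset.sum_add_distrib, ← Finset.smul_sum (r := 2 * c), sum_projMap_orthonormalBasis,
          Finset.sum_const, Finset.card_univ, Fintype.card_fin]
        module

section Deletion

variable [DecidableEq F] {x₀ : F}

lemma sum_sdiff_smul_projMap (h : IsFiveDesign S c) (hx₀ : x₀ ∈ S) {w : F → ℝ}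
    (hw : w (-x₀) = w x₀) :
    ∑ x ∈ S \ {x₀, -x₀}, w x • projMap x =
      ∑ x ∈ S, w x • projMap x - (2 * w x₀) • projMap x₀ := by
  have : IsAddTorsionFree F := .of_isTorsionFree ℝ F
  have hne : x₀ ≠ -x₀ := by
    rw [Ne, self_eq_neg, ← norm_eq_zero, h.norm_eq_one x₀ hx₀]
    exact one_ne_zero
  have hsub : {x₀, -x₀} ⊆ S :=
    Finset.insert_subset hx₀ (Finset.singleton_subset_iff.2 (h.neg_mem x₀ hx₀))
  rw [Finset.sum_sdiff_eq_sub hsub, Finset.sum_pair hne, hw, projMap_neg]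
  module

lemma neg_mem_sdiff (h : IsFiveDesign S c) {x : F} (hx : x ∈ S \ {x₀, -x₀}) :
    -x ∈ S \ {x₀, -x₀} := by
  simp only [Finset.mem_sdiff, Finset.mem_insert, Finset.mem_singleton, not_or] at hx ⊢
  exact ⟨h.neg_mem x hx.1, fun e => hx.2.2 (neg_eq_iff_eq_neg.1 e), fun e => hx.2.1 (neg_inj.1 e)⟩

lemma sum_sdiff_inner_sq_smul_projMap (h : IsFiveDesign S c) (hx₀ : x₀ ∈ S) (y : F) :
    ∑ x ∈ S \ {x₀, -x₀}, ⟪x, y⟫ ^ 2 • projMap x =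
      (c * ‖y‖ ^ 2) • LinearMap.id + (2 * c) • projMap y - (2 * ⟪x₀, y⟫ ^ 2) • projMap x₀ := by
  rw [h.sum_sdiff_smul_projMap hx₀ (by rw [inner_neg_left, neg_sq]),
    h.sum_inner_sq_smul_projMap]

variable [FiniteDimensional ℝ F]

lemma sum_sdiff_const_smul_projMap (h : IsFiveDesign S c) (hx₀ : x₀ ∈ S) (a : ℝ) :
    ∑ x ∈ S \ {x₀, -x₀}, a • projMap x =
      (a * (c * (Module.finrank ℝ F + 2))) • LinearMap.id - (2 * a) • projMap x₀ := by
  rw [h.sum_sdiff_smul_projMap hx₀ (w := fun _ => a) rfl, ← Finset.smul_sum, h.sum_projMap,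
    smul_smul]

-- The weights `c - 1 + ⟪x, x₀⟫ ^ 2` make the two contributions of `projMap x₀` cancel.
lemma sum_sdiff_eutactic_smul_projMap (h : IsFiveDesign S c) (hx₀ : x₀ ∈ S) :
    ∑ x ∈ S \ {x₀, -x₀}, (c - 1 + ⟪x, x₀⟫ ^ 2) • projMap x =
      (c * ((c - 1) * (Module.finrank ℝ F + 2) + 1)) • (LinearMap.id : F →ₗ[ℝ] F) := by
  simp only [add_smul (c - 1), Finset.sum_add_distrib]
  rw [h.sum_sdiff_const_smul_projMap hx₀, h.sum_sdiff_inner_sq_smul_projMap hx₀,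
    real_inner_self_eq_norm_sq, h.norm_eq_one x₀ hx₀]
  module

lemma isEutacticCfg_sdiff (h : IsFiveDesign S c) (hc : 1 < c) (hx₀ : x₀ ∈ S) :
    IsEutacticCfg ((S \ {x₀, -x₀} : Finset F) : Set F) := by
  set K : ℝ := c * ((c - 1) * (Module.finrank ℝ F + 2) + 1) with hK
  have : 0 < c - 1 := sub_pos.2 hc
  have hK_pos : 0 < K := by positivity
  refine isEutacticCfg_of_sum_smul_projMap (fun x => K⁻¹ * (c - 1 + ⟪x, x₀⟫ ^ 2))
    (fun x _ => by positivity) (fun x => h.neg_mem_sdiff)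
    (fun x => by rw [inner_neg_left, neg_sq]) ?_
  simp only [mul_smul K⁻¹, ← Finset.smul_sum]
  rw [h.sum_sdiff_eutactic_smul_projMap hx₀, ← hK, inv_smul_smul₀ hK_pos.ne']

lemma isPerfectCfg_sdiff (h : IsFiveDesign S c) (hc : 1 < c) (hx₀ : x₀ ∈ S) :
    IsPerfectCfg ((S \ {x₀, -x₀} : Finset F) : Set F) := by
  set W := Submodule.span ℝ (projMap '' ((S \ {x₀, -x₀} : Finset F) : Set F))
  have hid : (LinearMap.id : F →ₗ[ℝ] F) ∈ W := (h.isEutacticCfg_sdiff hc hx₀).id_mem_span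
  have hx₀_mem : projMap x₀ ∈ W := by
    have hsum := sum_smul_projMap_mem_span (S := S \ {x₀, -x₀}) fun _ => 1 / 2
    rw [h.sum_sdiff_const_smul_projMap hx₀] at hsum
    simpa using W.sub_mem (W.smul_mem (1 / 2 * (c * (Module.finrank ℝ F + 2))) hid) hsum
  refine isPerfectCfg_of_projMap_mem_span fun y => ?_
  have hsum := sum_smul_projMap_mem_span (S := S \ {x₀, -x₀}) fun x => ⟪x, y⟫ ^ 2
  rw [h.sum_sdiff_inner_sq_smul_projMap hx₀, W.sub_mem_iff_left (W.smul_mem _ hx₀_mem),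
    W.add_mem_iff_right (W.smul_mem _ hid)] at hsum
  exact (W.smul_mem_iff (by positivity)).1 hsum

end Deletion

theorem isExtremeCfg_sdiff [FiniteDimensional ℝ F] (h : IsFiveDesign S c) {x₀ : F} (hc : 1 < c)
    (hx₀ : x₀ ∈ S) : IsExtremeCfg ((S : Set F) \ {x₀, -x₀}) := by
  classical
  have hcoe : (S : Set F) \ {x₀, -x₀} = (S \ {x₀, -x₀} : Finset F) := by
    push_cast
    rfl
  rw [hcoe]
  exact ⟨h.isPerfectCfg_sdiff hc hx₀, h.isEutacticCfg_sdiff hc hx₀⟩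

end IsFiveDesign

section SignMoments

lemma sum_intUnits {M : Type*} [AddCommMonoid M] (f : ℤˣ → M) : ∑ s, f s = f 1 + f (-1) := by
  rw [show (Finset.univ : Finset ℤˣ) = {1, -1} from rfl, Finset.sum_pair (by decide)]

lemma sum_signs_succ {n : ℕ} {M : Type*} [AddCommMonoid M] (f : (Fin (n + 1) → ℤˣ) → M) :
    ∑ ε, f ε = ∑ ε : Fin n → ℤˣ, (f (Fin.cons 1 ε) + f (Fin.cons (-1) ε)) := by
  rw [← (Fin.consEquiv fun _ => ℤˣ).sum_comp, Fintype.sum_prod_type, sum_intUnits,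
    ← Finset.sum_add_distrib]
  rfl

lemma sum_signs_sum_mul_sq (n : ℕ) (y : Fin n → ℝ) :
    ∑ ε : Fin n → ℤˣ, (∑ i, (ε i : ℝ) * y i) ^ 2 = 2 ^ n * ∑ i, y i ^ 2 := by
  induction n with
  | zero => simp
  | succ n ih =>
    have hexpand (a t : ℝ) : (a + t) ^ 2 + (-a + t) ^ 2 = 2 * a ^ 2 + 2 * t ^ 2 := by ring
    simp only [sum_signs_succ, Fin.sum_univ_succ, Fin.cons_zero, Fin.cons_succ, Units.val_one,
      Units.val_neg, Int.cast_one, Int.cast_neg, one_mul, neg_mul, hexpand,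
      Finset.sum_add_distrib, ← Finset.mul_sum, ih]
    simp only [Finset.sum_const, Finset.card_univ, Fintype.card_pi, Fintype.card_units_int,
      Finset.prod_const, Fintype.card_fin, nsmul_eq_mul, Nat.cast_pow, Nat.cast_ofNat]
    ring

lemma sum_signs_sum_mul_pow_four (n : ℕ) (y : Fin n → ℝ) :
    ∑ ε : Fin n → ℤˣ, (∑ i, (ε i : ℝ) * y i) ^ 4 =
      2 ^ n * (3 * (∑ i, y i ^ 2) ^ 2 - 2 * ∑ i, y i ^ 4) := by
  induction n with
  | zero => simp
  | succ n ih =>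
    have hexpand (a t : ℝ) :
        (a + t) ^ 4 + (-a + t) ^ 4 = 2 * a ^ 4 + 12 * a ^ 2 * t ^ 2 + 2 * t ^ 4 := by ring
    simp only [sum_signs_succ, Fin.sum_univ_succ, Fin.cons_zero, Fin.cons_succ, Units.val_one,
      Units.val_neg, Int.cast_one, Int.cast_neg, one_mul, neg_mul, hexpand,
      Finset.sum_add_distrib, ← Finset.mul_sum, ih, sum_signs_sum_mul_sq]
    simp only [Finset.sum_const, Finset.card_univ, Fintype.card_pi, Fintype.card_units_int,
      Finset.prod_const, Fintype.card_fin, nsmul_eq_mul, Nat.cast_pow, Nat.cast_ofNat]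
    ring

variable {ι : Type*} [Fintype ι]

-- Each monomial of degree `k` misses some coordinate, and flipping that sign negates its term.
lemma sum_signs_prod_mul_sum_mul_pow [DecidableEq ι] {k : ℕ} (hk : k < Fintype.card ι)
    (y : ι → ℝ) :
    ∑ ε : ι → ℤˣ, ((∏ i, ε i : ℤˣ) : ℝ) * (∑ i, (ε i : ℝ) * y i) ^ k = 0 := by
  simp only [Fintype.sum_pow, Finset.mul_sum]
  rw [Finset.sum_comm]
  refine Finset.sum_eq_zero fun p _ => ?_
  obtain ⟨j, hj⟩ : ∃ j, ∀ m, p m ≠ j := by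
    by_contra! hsurj
    exact hk.not_ge (by simpa using Fintype.card_le_of_surjective p hsurj)
  let flip : (ι → ℤˣ) ≃ (ι → ℤˣ) := Equiv.mulRight (Pi.mulSingle j (-1))
  have hprod (ε) : ∏ i, flip ε i = -∏ i, ε i := by
    simp [flip, Finset.prod_mul_distrib]
  have hmonomial (ε) (m : Fin k) : flip ε (p m) = ε (p m) := by
    simp [flip, Pi.mulSingle_eq_of_ne (hj m)]
  rw [← self_eq_neg, ← Finset.sum_neg_distrib]
  refine Fintype.sum_equiv flip _ _ fun ε => ?_
  simp only [hprod, hmonomial, Units.val_neg, Int.cast_neg, neg_mul, neg_neg]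

lemma two_mul_sum_evenSigns [DecidableEq ι] (f : (ι → ℤˣ) → ℝ) :
    2 * ∑ ε : {ε : ι → ℤˣ // ∏ i, ε i = 1}, f ε =
      ∑ ε, f ε + ∑ ε : ι → ℤˣ, ((∏ i, ε i : ℤˣ) : ℝ) * f ε := by
  rw [← Finset.sum_subtype (Finset.univ.filter fun ε : ι → ℤˣ => ∏ i, ε i = 1) (by simp) f,
    Finset.sum_filter, Finset.mul_sum, ← Finset.sum_add_distrib]
  refine Finset.sum_congr rfl fun ε _ => ?_
  rcases Int.units_eq_one_or (∏ i, ε i) with h | h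
  · simp [h, two_mul]
  · simp [h]

lemma sum_evenSigns_sum_mul_pow_four {n : ℕ} (hn : 4 < n) (y : Fin n → ℝ) :
    2 * ∑ ε : {ε : Fin n → ℤˣ // ∏ i, ε i = 1}, (∑ i, (ε.1 i : ℝ) * y i) ^ 4 =
      2 ^ n * (3 * (∑ i, y i ^ 2) ^ 2 - 2 * ∑ i, y i ^ 4) := by
  rw [two_mul_sum_evenSigns fun ε => (∑ i, (ε i : ℝ) * y i) ^ 4, sum_signs_sum_mul_pow_four,
    sum_signs_prod_mul_sum_mul_pow (by simpa using hn), add_zero]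

lemma two_mul_sum_lt_pairs [LinearOrder ι] {g : ι → ι → ℝ} (hg : ∀ i j, g i j = g j i) :
    2 * ∑ p : {p : ι × ι // p.1 < p.2}, g p.1.1 p.1.2 = ∑ i, ∑ j, g i j - ∑ i, g i i := by
  have htrichotomy (i j : ι) : g i j =
      (if i < j then g i j else 0) + (if j < i then g j i else 0) + if i = j then g i j else 0 := by
    rcases lt_trichotomy i j with h | rfl | h
    · simp [h, h.not_gt, h.ne]
    · simp
    · simp [h, h.not_gt, h.ne', hg i j]
  have hlt : ∑ p : {p : ι × ι // p.1 < p.2}, g p.1.1 p.1.2 =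
      ∑ i, ∑ j, if i < j then g i j else 0 := by
    rw [← Finset.sum_subtype (Finset.univ.filter fun p : ι × ι => p.1 < p.2) (by simp)
      fun p => g p.1 p.2, Finset.sum_filter, Fintype.sum_prod_type]
  have hsplit : ∑ i, ∑ j, g i j = 2 * (∑ i, ∑ j, if i < j then g i j else 0) + ∑ i, g i i := by
    rw [Fintype.sum_congr _ _ fun i => Fintype.sum_congr _ _ (htrichotomy i)]
    simp only [Finset.sum_add_distrib]
    rw [Finset.sum_comm (f := fun i j => if j < i then g j i else 0), two_mul]
    simp
  rw [hlt, hsplit, add_sub_cancel_right]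

lemma sum_lt_pairs_pow_four [LinearOrder ι] (y : ι → ℝ) :
    ∑ p : {p : ι × ι // p.1 < p.2}, ∑ s : ℤˣ, ∑ t : ℤˣ, ((s : ℝ) * y p.1.1 + t * y p.1.2) ^ 4 =
      12 * (∑ i, y i ^ 2) ^ 2 + 4 * (Fintype.card ι - 4) * ∑ i, y i ^ 4 := by
  have hexpand (a b : ℝ) : ∑ s : ℤˣ, ∑ t : ℤˣ, ((s : ℝ) * a + t * b) ^ 4 =
      2 * (2 * a ^ 4 + 12 * a ^ 2 * b ^ 2 + 2 * b ^ 4) := by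
    simp only [sum_intUnits]
    push_cast
    ring
  simp only [hexpand, ← Finset.mul_sum]
  have hdiag (a : ℝ) : 2 * a ^ 4 + 12 * a ^ 2 * a ^ 2 + 2 * a ^ 4 = 16 * a ^ 4 := by ring
  rw [two_mul_sum_lt_pairs (g := fun i j => 2 * y i ^ 4 + 12 * y i ^ 2 * y j ^ 2 + 2 * y j ^ 4)
    fun i j => by ring]
  simp only [hdiag, Finset.sum_add_distrib, ← Finset.mul_sum, ← Finset.sum_mul,
    Finset.sum_const, Finset.card_univ, nsmul_eq_mul]
  ring

end SignMoments

section RootsE8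

lemma inv_sqrt_two_sq : (√2 : ℝ)⁻¹ ^ 2 = 1 / 2 := by
  rw [inv_pow, Real.sq_sqrt zero_le_two, one_div]

lemma intUnits_cast_sq (s : ℤˣ) : (s : ℝ) ^ 2 = 1 := by
  rcases Int.units_eq_one_or s with rfl | rfl <;> simp

variable {n : ℕ}

/-- The root `(s eᵢ + t eⱼ) / √2` of `D_n`, scaled to a unit vector. -/
def pairRoot (i j : Fin n) (s t : ℤˣ) : Euc n :=
  (√2)⁻¹ • ((s : ℝ) • EuclideanSpace.single i 1 + (t : ℝ) • EuclideanSpace.single j 1)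

/-- The vector `ε / (2√2)`; for `n = 8` it is a unit vector, and a minimal vector of `E₈` when the
signs multiply to `1`. -/
def spinRoot (ε : Fin n → ℤˣ) : Euc n :=
  (2 * √2)⁻¹ • ∑ i, (ε i : ℝ) • EuclideanSpace.single i 1

/-- Index set of the 240 minimal vectors of `E₈`. Restricting to pairs `i < j` makes `rootE8`
injective. -/
abbrev IndexE8 : Type :=
  ({p : Fin 8 × Fin 8 // p.1 < p.2} × ℤˣ × ℤˣ) ⊕ {ε : Fin 8 → ℤˣ // ∏ i, ε i = 1}

/-- The enumeration of the minimal vectors of `E₈` by `IndexE8`. -/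
def rootE8 : IndexE8 → Euc 8
  | .inl (p, s, t) => pairRoot p.1.1 p.1.2 s t
  | .inr ε => spinRoot ε

lemma pairRoot_apply (i j : Fin n) (s t : ℤˣ) (k : Fin n) :
    pairRoot i j s t k =
      (√2)⁻¹ * ((if k = i then (s : ℝ) else 0) + if k = j then (t : ℝ) else 0) := by
  simp [pairRoot, mul_add]

lemma spinRoot_apply (ε : Fin n → ℤˣ) (k : Fin n) : spinRoot ε k = (2 * √2)⁻¹ * (ε k : ℝ) := by
  simp [spinRoot, Pi.single_apply]

lemma inner_pairRoot (i j : Fin n) (s t : ℤˣ) (y : Euc n) :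
    ⟪pairRoot i j s t, y⟫ = (√2)⁻¹ * ((s : ℝ) * y i + t * y j) := by
  simp [pairRoot, mul_add, real_inner_smul_left, inner_add_left, EuclideanSpace.inner_single_left]

lemma inner_spinRoot (ε : Fin n → ℤˣ) (y : Euc n) :
    ⟪spinRoot ε, y⟫ = (2 * √2)⁻¹ * ∑ i, (ε i : ℝ) * y i := by
  simp [spinRoot, real_inner_smul_left, sum_inner, EuclideanSpace.inner_single_left]

lemma norm_pairRoot {i j : Fin n} (hij : i ≠ j) (s t : ℤˣ) : ‖pairRoot i j s t‖ = 1 := by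
  have hsq : ‖pairRoot i j s t‖ ^ 2 = 1 := by
    rw [← real_inner_self_eq_norm_sq, inner_pairRoot, pairRoot_apply, pairRoot_apply,
      if_pos rfl, if_neg hij, if_neg hij.symm, if_pos rfl]
    linear_combination ((s : ℝ) ^ 2 + (t : ℝ) ^ 2) * inv_sqrt_two_sq +
      intUnits_cast_sq s / 2 + intUnits_cast_sq t / 2
  exact (pow_eq_one_iff_of_nonneg (norm_nonneg _) two_ne_zero).1 hsq

lemma norm_spinRoot (ε : Fin 8 → ℤˣ) : ‖spinRoot ε‖ = 1 := by
  have hsq (i : Fin 8) : spinRoot ε i ^ 2 = 1 / 8 := by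
    rw [spinRoot_apply, mul_pow, intUnits_cast_sq, mul_inv, mul_pow, inv_sqrt_two_sq]
    norm_num
  simp [EuclideanSpace.norm_eq, hsq]

lemma norm_rootE8 (a : IndexE8) : ‖rootE8 a‖ = 1 := by
  rcases a with ⟨p, s, t⟩ | ε
  · exact norm_pairRoot p.2.ne s t
  · exact norm_spinRoot ε

lemma pairRoot_apply_ne_zero_iff {i j : Fin n} (hij : i ≠ j) (s t : ℤˣ) (k : Fin n) :
    pairRoot i j s t k ≠ 0 ↔ k = i ∨ k = j := by
  rw [pairRoot_apply]
  by_cases hi : k = i <;> by_cases hj : k = j <;> simp_all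

lemma spinRoot_apply_ne_zero (ε : Fin n → ℤˣ) (k : Fin n) : spinRoot ε k ≠ 0 := by
  simp [spinRoot_apply]

lemma pairRoot_ne_spinRoot (hn : 2 < n) {i j : Fin n} (hij : i ≠ j) (s t : ℤˣ) (ε : Fin n → ℤˣ) :
    pairRoot i j s t ≠ spinRoot ε := by
  intro h
  obtain ⟨k, hki, hkj⟩ := Fin.exists_ne_and_ne_of_two_lt i j hn
  have hk := (pairRoot_apply_ne_zero_iff hij s t k).1 (h ▸ spinRoot_apply_ne_zero ε k)
  exact hk.elim hki hkj

lemma spinRoot_injective : Function.Injective (spinRoot (n := n)) := by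
  intro ε δ h
  ext k
  have hk : spinRoot ε k = spinRoot δ k := by rw [h]
  simpa [spinRoot_apply] using hk

lemma pairRoot_injective {i j i' j' : Fin n} {s t s' t' : ℤˣ} (hij : i < j) (hij' : i' < j')
    (h : pairRoot i j s t = pairRoot i' j' s' t') : i = i' ∧ j = j' ∧ s = s' ∧ t = t' := by
  have hsupport (k : Fin n) : (k = i ∨ k = j) ↔ (k = i' ∨ k = j') := by
    rw [← pairRoot_apply_ne_zero_iff hij.ne s t, h, pairRoot_apply_ne_zero_iff hij'.ne]
  have hi := (hsupport i).1 (.inl rfl)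
  have hj := (hsupport j).1 (.inr rfl)
  obtain ⟨rfl, rfl⟩ : i = i' ∧ j = j' := by omega
  refine ⟨rfl, rfl, ?_, ?_⟩
  · have hs : pairRoot i j s t i = pairRoot i j s' t' i := by rw [h]
    exact Units.ext (by simpa [pairRoot_apply, hij.ne] using hs)
  · have ht : pairRoot i j s t j = pairRoot i j s' t' j := by rw [h]
    exact Units.ext (by simpa [pairRoot_apply, hij.ne'] using ht)

lemma rootE8_injective : Function.Injective rootE8 := by
  rintro (⟨⟨⟨i, j⟩, hij⟩, s, t⟩ | ε) (⟨⟨⟨i', j'⟩, hij'⟩, s', t'⟩ | δ) h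
  · obtain ⟨rfl, rfl, rfl, rfl⟩ := pairRoot_injective hij hij' h
    rfl
  · exact (pairRoot_ne_spinRoot (by norm_num) hij.ne _ _ _ h).elim
  · exact (pairRoot_ne_spinRoot (by norm_num) hij'.ne _ _ _ h.symm).elim
  · exact congrArg Sum.inr (Subtype.ext (spinRoot_injective h))

lemma exists_intUnits_cast_eq_iff {r : ℝ} : (∃ s : ℤˣ, ((s : ℤ) : ℝ) = r) ↔ r = 1 ∨ r = -1 := by
  constructor
  · rintro ⟨s, rfl⟩
    rcases Int.units_eq_one_or s with rfl | rfl <;> simp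
  · rintro (rfl | rfl)
    · exact ⟨1, by simp⟩
    · exact ⟨-1, by simp⟩

lemma pairRoot_comm (i j : Fin n) (s t : ℤˣ) : pairRoot i j s t = pairRoot j i t s := by
  rw [pairRoot, pairRoot, add_comm]

lemma range_rootE8 : Set.range rootE8 = cfgE8 := by
  ext x
  constructor
  · rintro ⟨⟨p, s, t⟩ | ε, rfl⟩
    · exact .inl ⟨p.1.1, p.1.2, p.2.ne, s, t, exists_intUnits_cast_eq_iff.1 ⟨s, rfl⟩,
        exists_intUnits_cast_eq_iff.1 ⟨t, rfl⟩, rfl⟩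
    · refine .inr ⟨fun i => ε.1 i, fun i => exists_intUnits_cast_eq_iff.1 ⟨ε.1 i, rfl⟩, ?_, rfl⟩
      simpa using congrArg (fun s : ℤˣ => ((s : ℤ) : ℝ)) ε.2
  · rintro (⟨i, j, hij, σ, τ, hσ, hτ, rfl⟩ | ⟨δ, hδ, hprod, rfl⟩)
    · obtain ⟨s, rfl⟩ := exists_intUnits_cast_eq_iff.2 hσ
      obtain ⟨t, rfl⟩ := exists_intUnits_cast_eq_iff.2 hτ
      rcases hij.lt_or_gt with h | h
      · exact ⟨.inl (⟨(i, j), h⟩, s, t), rfl⟩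
      · exact ⟨.inl (⟨(j, i), h⟩, t, s), pairRoot_comm j i t s⟩
    · choose ε hε using fun i => exists_intUnits_cast_eq_iff.2 (hδ i)
      obtain rfl : (fun i => ((ε i : ℤ) : ℝ)) = δ := funext hε
      beta_reduce at hprod
      norm_cast at hprod
      exact ⟨.inr ⟨ε, Units.ext hprod⟩, rfl⟩

/-- The configuration `cfgE8` as a `Finset`, for summing over it. -/
def rootsE8 : Finset (Euc 8) := Finset.univ.map ⟨rootE8, rootE8_injective⟩

lemma coe_rootsE8 : (rootsE8 : Set (Euc 8)) = cfgE8 := by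
  simp [rootsE8, range_rootE8]

lemma mem_rootsE8 {x : Euc 8} : x ∈ rootsE8 ↔ ∃ a, rootE8 a = x := by
  simp [rootsE8]

lemma neg_pairRoot (i j : Fin n) (s t : ℤˣ) : -pairRoot i j s t = pairRoot i j (-s) (-t) := by
  simp [pairRoot, add_comm]

lemma neg_spinRoot (ε : Fin n → ℤˣ) : -spinRoot ε = spinRoot (-ε) := by
  simp [spinRoot]

lemma neg_mem_rootsE8 {x : Euc 8} (hx : x ∈ rootsE8) : -x ∈ rootsE8 := by
  rw [mem_rootsE8] at hx ⊢
  obtain ⟨⟨p, s, t⟩ | ⟨ε, hε⟩, rfl⟩ := hx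
  · exact ⟨.inl (p, -s, -t), (neg_pairRoot _ _ s t).symm⟩
  · refine ⟨.inr ⟨-ε, ?_⟩, (neg_spinRoot ε).symm⟩
    simp only [Pi.neg_apply, Finset.prod_neg, hε, mul_one]
    rfl

lemma sum_inner_pairRoot_pow_four (y : Euc n) :
    ∑ p : {p : Fin n × Fin n // p.1 < p.2}, ∑ s, ∑ t, ⟪pairRoot p.1.1 p.1.2 s t, y⟫ ^ 4 =
      3 * (∑ i, y i ^ 2) ^ 2 + (n - 4) * ∑ i, y i ^ 4 := by
  have hscale : (√2)⁻¹ ^ 4 = 1 / 4 := by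
    rw [pow_mul (√2)⁻¹ 2 2, inv_sqrt_two_sq]
    norm_num
  simp only [inner_pairRoot, mul_pow, hscale, ← Finset.mul_sum]
  rw [sum_lt_pairs_pow_four, Fintype.card_fin]
  ring

lemma sum_inner_spinRoot_pow_four (y : Euc 8) :
    ∑ ε : {ε : Fin 8 → ℤˣ // ∏ i, ε i = 1}, ⟪spinRoot ε, y⟫ ^ 4 =
      6 * (∑ i, y i ^ 2) ^ 2 - 4 * ∑ i, y i ^ 4 := by
  have hscale : (2 * √2)⁻¹ ^ 4 = 1 / 64 := by
    rw [mul_inv, mul_pow, pow_mul (√2)⁻¹ 2 2, inv_sqrt_two_sq]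
    norm_num
  simp only [inner_spinRoot, mul_pow, hscale, ← Finset.mul_sum]
  linear_combination sum_evenSigns_sum_mul_pow_four (n := 8) (by norm_num) y / 128

lemma isFiveDesign_rootsE8 : IsFiveDesign rootsE8 3 where
  norm_eq_one x hx := by
    obtain ⟨a, rfl⟩ := mem_rootsE8.1 hx
    exact norm_rootE8 a
  neg_mem _ := neg_mem_rootsE8
  sum_inner_pow_four y := by
    rw [rootsE8, Finset.sum_map, Fintype.sum_sum_type, Fintype.sum_prod_type]
    simp only [Fintype.sum_prod_type]
    change ∑ p : {p : Fin 8 × Fin 8 // p.1 < p.2}, ∑ s, ∑ t, ⟪pairRoot p.1.1 p.1.2 s t, y⟫ ^ 4 +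
      ∑ ε : {ε : Fin 8 → ℤˣ // ∏ i, ε i = 1}, ⟪spinRoot ε, y⟫ ^ 4 = _
    rw [sum_inner_pairRoot_pow_four, sum_inner_spinRoot_pow_four, pow_mul ‖y‖ 2 2,
      EuclideanSpace.real_norm_sq_eq]
    ring

end RootsE8

/-- Lemma 3.1, `E₈` case: the configuration of minimal vectors of `E₈`
is redundantly extreme. -/
theorem cfgE8_redundantly_extreme :
    ∀ x₀ ∈ cfgE8, IsPerfectCfg (cfgE8 \ {x₀, -x₀}) ∧ IsEutacticCfg (cfgE8 \ {x₀, -x₀}) := by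
  intro x₀ hx₀
  rw [← coe_rootsE8] at hx₀ ⊢
  exact isFiveDesign_rootsE8.isExtremeCfg_sdiff (by norm_num) hx₀

end
end

section
/- Let n ≥ 2 and suppose Λ₀ is a critical lattice of the unit ball B^n which is unique up to rotation, with m(Λ₀) = 1, and suppose the configuration S(Λ₀) of minimal vectors is minimally extreme with eutaxy coefficients υ_x. Then for every ε' > 0 there exists ε > 0 such that for every origin-symmetric convex body K with (1−ε)B^n ⊆ K ⊆ (1+ε)B^n there is a lattice Λ' admissible for K satisfying d(Λ')/d(Λ₀) ≤ 1 + Σ_{x∈S(Λ₀)} υ_x ρ_x + ε' Σ_{x∈S(Λ₀)} |ρ_x|, where ρ_x = r_K(x) − 1 and r_K(x) = max{λ ≥ 0 : λx ∈ K} is the radial function of K. -/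
open scoped RealInnerProductSpace
open Metric MeasureTheory

noncomputable section

/-! One deforms `Λ₀` by `1 + A` with `A` small and self-adjoint. As `S(Λ₀)` is perfect and has as
few elements as a perfect configuration can, the values `⟪A x, x⟫` at the minimal vectors can be
prescribed arbitrarily, up to `x ↦ -x`, at the cost of a bounded factor in `‖A‖`.

Prescribe `⟪A x, x⟫ = ρ_x + η σ` with `σ = Σ |ρ_x|` and `η` small. A normal `u` of a supporting
hyperplane of `K` at `r_K(x) x` is within `O(√ε)` of `x`, so the margin `η σ` pushes `x + A x`
across that hyperplane, while lattice vectors that are not minimal have norm at least `1 + δ` and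
stay outside `K`.

The eutaxy relation gives `tr A = Σ υ_x ρ_x + n η σ`, and `det (1 + A) ≤ exp (tr A)`. The quadratic
error is `O(σ²)`, which is `O(ε σ)`. -/

theorem exists_half_of_neg_mem {G : Type*} [InvolutiveNeg G] {S : Set G} (hS : S.Finite)
    (hne : ∀ x ∈ S, -x ≠ x) (hneg : ∀ x ∈ S, -x ∈ S) :
    ∃ H ⊆ S, 2 * H.ncard ≤ S.ncard ∧ ∀ x ∈ S, x ∈ H ∨ -x ∈ H := by
  obtain ⟨H, hHS, _, hinj, hsurj⟩ := S.exists_subset_bijOn fun x => s(x, -x)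
  have hdisj : Disjoint H (-H) := Set.disjoint_left.2 fun x hx hx' =>
    hne x (hHS hx) (hinj (Set.mem_neg.1 hx') hx (by simp [Sym2.eq_swap]))
  have hHfin := hS.subset hHS
  refine ⟨H, hHS, ?_, fun x hx => ?_⟩
  · calc 2 * H.ncard = (H ∪ -H).ncard := by
          rw [Set.ncard_union_eq hdisj hHfin hHfin.neg, Set.ncard_neg, two_mul]
      _ ≤ S.ncard := Set.ncard_le_ncard
          (Set.union_subset hHS fun x hx => by simpa using hneg _ (hHS hx)) hS
  · obtain ⟨y, hy, hyx⟩ := hsurj (Set.mem_image_of_mem _ hx)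
    rcases Sym2.eq_iff.1 hyx with ⟨rfl, _⟩ | ⟨rfl, _⟩
    exacts [.inl hy, .inr hy]

section InnerProduct

variable {F : Type*} [NormedAddCommGroup F] [InnerProductSpace ℝ F]

theorem exists_unit_inner_lt_of_notMem_interior [CompleteSpace F] {K : Set F}
    (hK : Convex ℝ K) (hne : (interior K).Nonempty) {p : F} (hp : p ∉ interior K) :
    ∃ u : F, ‖u‖ = 1 ∧ ∀ y ∈ interior K, ⟪y, u⟫ < ⟪p, u⟫ := by
  obtain ⟨f, hf⟩ := geometric_hahn_banach_open_point hK.interior isOpen_interior hp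
  set v := (InnerProductSpace.toDual ℝ F).symm f
  have hfv (y : F) : f y = ⟪y, v⟫ := by
    rw [real_inner_comm, InnerProductSpace.toDual_symm_apply]
  have hv : v ≠ 0 := by
    rintro hv
    obtain ⟨y, hy⟩ := hne
    simpa [hfv, hv] using hf y hy
  refine ⟨‖v‖⁻¹ • v, norm_smul_inv_norm hv, fun y hy => ?_⟩
  rw [real_inner_smul_right, real_inner_smul_right, ← hfv, ← hfv]
  exact mul_lt_mul_of_pos_left (hf y hy) (by positivity)

theorem le_of_forall_interior_inner_lt {K : Set F} {u : F} {r a : ℝ} (hr : 0 < r)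
    (hK : closedBall 0 r ⊆ K) (hu : ‖u‖ = 1) (h : ∀ y ∈ interior K, ⟪y, u⟫ < a) : r ≤ a := by
  have hball : ball 0 r ⊆ {y | ⟪y, u⟫ ≤ a} := fun y hy =>
    (h y (interior_maximal (ball_subset_closedBall.trans hK) isOpen_ball hy)).le
  have hmem : r • u ∈ closure (ball 0 r) := by
    rw [closure_ball _ hr.ne']
    simp [norm_smul, hu, abs_of_pos hr]
  simpa [real_inner_smul_left, hu] using
    closure_minimal hball (isClosed_le (by fun_prop) continuous_const) hmem

theorem norm_sub_le_two_mul_sqrt {x u : F} {r ε : ℝ} (hx : ‖x‖ = 1) (hu : ‖u‖ = 1)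
    (hε0 : 0 ≤ ε) (hε1 : ε < 1) (hr0 : 0 ≤ r) (hr : r ≤ 1 + ε) (h : 1 - ε ≤ r * ⟪x, u⟫) :
    ‖u - x‖ ≤ 2 * √ε := by
  have hpos : 0 < ⟪x, u⟫ := pos_of_mul_pos_right (by linarith) hr0
  have hinner : 1 - 2 * ε ≤ ⟪x, u⟫ := by nlinarith
  refine le_of_sq_le_sq ?_ (by positivity)
  rw [norm_sub_sq_real, hx, hu, real_inner_comm, mul_pow, Real.sq_sqrt hε0]
  linarith

theorem IsPerfectCfg.of_forall_mem_or_neg_mem {S H : Set F} (hS : IsPerfectCfg S)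
    (hH : ∀ x ∈ S, x ∈ H ∨ -x ∈ H) : IsPerfectCfg H := by
  refine fun T hT => Submodule.span_mono ?_ (hS T hT)
  rintro _ ⟨x, hx, rfl⟩
  rcases hH x hx with hxH | hxH
  · exact ⟨x, hxH, rfl⟩
  · exact ⟨-x, hxH, by ext; simp [projMap]⟩

section FiniteDimensional

variable [FiniteDimensional ℝ F]

open Module (finrank)

theorem trace_comp_projMap (A : F →ₗ[ℝ] F) (x : F) :
    LinearMap.trace ℝ F (A ∘ₗ projMap x) = ⟪A x, x⟫ := by
  have : A ∘ₗ projMap x = (innerₛₗ ℝ x).smulRight (A x) := by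
    ext y
    simp [projMap, real_inner_comm]
  rw [this, LinearMap.trace_smulRight, innerₛₗ_apply_apply, real_inner_comm]

theorem trace_eq_sum_mul_inner {s : Finset F} {υ : F → ℝ}
    (h : ∑ x ∈ s, υ x • projMap x = (LinearMap.id : F →ₗ[ℝ] F)) (A : F →ₗ[ℝ] F) :
    LinearMap.trace ℝ F A = ∑ x ∈ s, υ x * ⟪A x, x⟫ := by
  calc LinearMap.trace ℝ F A
      = LinearMap.trace ℝ F (A ∘ₗ ∑ x ∈ s, υ x • projMap x) := by rw [h, LinearMap.comp_id]
    _ = ∑ x ∈ s, υ x * ⟪A x, x⟫ := by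
      simp only [← Module.End.mul_eq_comp, Finset.mul_sum, mul_smul_comm, map_sum, map_smul]
      simp only [Module.End.mul_eq_comp, trace_comp_projMap, smul_eq_mul]

theorem sum_eq_finrank_of_eutaxy {s : Finset F} {υ : F → ℝ} (hs : ∀ x ∈ s, ‖x‖ = 1)
    (h : ∑ x ∈ s, υ x • projMap x = (LinearMap.id : F →ₗ[ℝ] F)) :
    ∑ x ∈ s, υ x = finrank ℝ F := by
  rw [← LinearMap.trace_id ℝ F, trace_eq_sum_mul_inner h]
  exact Finset.sum_congr rfl fun x hx => by simp [hs x hx]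

theorem abs_trace_le (A : F →L[ℝ] F) : |LinearMap.trace ℝ F A| ≤ finrank ℝ F * ‖A‖ := by
  let b := stdOrthonormalBasis ℝ F
  rw [LinearMap.trace_eq_sum_inner _ b]
  calc |∑ i, ⟪b i, A (b i)⟫| ≤ ∑ i, |⟪b i, A (b i)⟫| := Finset.abs_sum_le_sum_abs _ _
    _ ≤ ∑ _i : Fin (finrank ℝ F), ‖A‖ := by
      gcongr with i
      calc |⟪b i, A (b i)⟫| ≤ ‖b i‖ * ‖A (b i)‖ := abs_real_inner_le_norm _ _
        _ ≤ ‖A‖ := by simpa using A.le_opNorm (b i)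
    _ = finrank ℝ F * ‖A‖ := by simp

theorem abs_det_le_exp_of_isPositive {T : F →ₗ[ℝ] F} (hT : T.IsPositive) :
    |LinearMap.det T| ≤ Real.exp (LinearMap.trace ℝ F T - finrank ℝ F) := by
  have hdet := hT.isSymmetric.det_eq_prod_eigenvalues rfl
  have htrace := LinearMap.IsSymmetric.trace_eq_sum_eigenvalues rfl hT.isSymmetric
  simp only [RCLike.ofReal_real_eq_id, id_eq] at hdet htrace
  have hnonneg := hT.nonneg_eigenvalues rfl
  calc |LinearMap.det T| = ∏ i, hT.isSymmetric.eigenvalues rfl i := by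
        rw [hdet, abs_of_nonneg (Finset.prod_nonneg fun i _ => hnonneg i)]
    _ ≤ ∏ i, Real.exp (hT.isSymmetric.eigenvalues rfl i - 1) :=
      Finset.prod_le_prod (fun i _ => hnonneg i) fun i _ => by
        linarith [Real.add_one_le_exp (hT.isSymmetric.eigenvalues rfl i - 1)]
    _ = Real.exp (LinearMap.trace ℝ F T - finrank ℝ F) := by
      rw [← Real.exp_sum, Finset.sum_sub_distrib, htrace]
      simp

theorem isPositive_one_add {A : F →L[ℝ] F} (hA : IsSelfAdjoint A) (hA1 : ‖A‖ ≤ 1) :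
    (1 + A).IsPositive := by
  refine (ContinuousLinearMap.isPositive_iff' _).2 ⟨(IsSelfAdjoint.one _).add hA, fun x => ?_⟩
  have hAx : |⟪A x, x⟫| ≤ ‖x‖ ^ 2 := calc
    |⟪A x, x⟫| ≤ ‖A x‖ * ‖x‖ := abs_real_inner_le_norm _ _
    _ ≤ 1 * ‖x‖ * ‖x‖ := by gcongr; exact A.le_of_opNorm_le hA1 x
    _ = ‖x‖ ^ 2 := by ring
  have : ⟪(1 + A) x, x⟫ = ‖x‖ ^ 2 + ⟪A x, x⟫ := by simp [inner_add_left]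
  linarith [neg_le_of_abs_le hAx]

theorem det_one_add_ne_zero {A : F →L[ℝ] F} (hA : ‖A‖ < 1) : (1 + A).det ≠ 0 := by
  have hunit : IsUnit (1 - -A) := isUnit_one_sub_of_norm_lt_one (by rwa [norm_neg])
  rw [sub_neg_eq_add] at hunit
  exact (LinearMap.isUnit_det _ (hunit.map ContinuousLinearMap.toLinearMapRingHom)).ne_zero

theorem abs_det_one_add_le {A : F →L[ℝ] F} (hA : IsSelfAdjoint A) (hA1 : ‖A‖ ≤ 1)
    (hdA : finrank ℝ F * ‖A‖ ≤ 1) :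
    |(1 + A).det| ≤ 1 + LinearMap.trace ℝ F A + (finrank ℝ F * ‖A‖) ^ 2 := by
  have htrace : LinearMap.trace ℝ F ↑(1 + A) - finrank ℝ F = LinearMap.trace ℝ F A := by
    simp
  have hdet := abs_det_le_exp_of_isPositive (isPositive_one_add hA hA1).toLinearMap
  rw [htrace] at hdet
  have habs := abs_trace_le A
  have hexp := (abs_le.1 (Real.abs_exp_sub_one_sub_id_le (habs.trans hdA))).2
  have hsq : (LinearMap.trace ℝ F A) ^ 2 ≤ (finrank ℝ F * ‖A‖) ^ 2 :=
    sq_le_sq' (neg_le_of_abs_le habs) (le_of_abs_le habs)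
  change |LinearMap.det _| ≤ _
  linarith

theorem abs_det_one_add_le_of_eutaxy {s : Finset F} {υ ρ : F → ℝ} {t : ℝ}
    (hs : ∀ x ∈ s, ‖x‖ = 1) (hυ : ∑ x ∈ s, υ x • projMap x = (LinearMap.id : F →ₗ[ℝ] F))
    {A : F →L[ℝ] F} (hA : IsSelfAdjoint A) (hA1 : ‖A‖ ≤ 1) (hdA : finrank ℝ F * ‖A‖ ≤ 1)
    (hval : ∀ x ∈ s, ⟪A x, x⟫ = ρ x + t) :
    |(1 + A).det| ≤ 1 + ∑ x ∈ s, υ x * ρ x + finrank ℝ F * t + (finrank ℝ F * ‖A‖) ^ 2 := by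
  have htrace : LinearMap.trace ℝ F A = ∑ x ∈ s, υ x * ρ x + finrank ℝ F * t := by
    rw [trace_eq_sum_mul_inner hυ, ← sum_eq_finrank_of_eutaxy hs hυ, Finset.sum_mul,
      ← Finset.sum_add_distrib]
    exact Finset.sum_congr rfl fun x hx => by rw [← mul_add, ← hval x hx]; rfl
  linarith [abs_det_one_add_le hA hA1 hdA]

theorem abs_det_one_add_le_of_eutaxy_of_le {s : Finset F} {υ ρ : F → ℝ} {C η κ σ τ : ℝ}
    (hs : ∀ x ∈ s, ‖x‖ = 1) (hυ : ∑ x ∈ s, υ x • projMap x = (LinearMap.id : F →ₗ[ℝ] F))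
    {A : F →L[ℝ] F} (hA : IsSelfAdjoint A) (hA1 : ‖A‖ ≤ 1)
    (hval : ∀ x ∈ s, ⟪A x, x⟫ = ρ x + η * σ) (hC : 0 ≤ C) (hσ : 0 ≤ σ) (hAσ : ‖A‖ ≤ C * σ)
    (hAκ : ‖A‖ ≤ κ) (hdκ : finrank ℝ F * κ ≤ 1) (hη : finrank ℝ F * η ≤ τ / 2)
    (hκ : finrank ℝ F ^ 2 * C * κ ≤ τ / 2) :
    |(1 + A).det| ≤ 1 + ∑ x ∈ s, υ x * ρ x + τ * σ := by
  have hquad : (finrank ℝ F * ‖A‖) ^ 2 ≤ τ / 2 * σ := calc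
    (finrank ℝ F * ‖A‖) ^ 2 = finrank ℝ F ^ 2 * (‖A‖ * ‖A‖) := by ring
    _ ≤ finrank ℝ F ^ 2 * (C * σ * κ) := by gcongr
    _ = finrank ℝ F ^ 2 * C * κ * σ := by ring
    _ ≤ τ / 2 * σ := by gcongr
  have hlin := mul_le_mul_of_nonneg_right hη hσ
  have hdA : finrank ℝ F * ‖A‖ ≤ 1 := le_trans (by gcongr) hdκ
  linarith [abs_det_one_add_le_of_eutaxy hs hυ hA hA1 hdA hval]

theorem IsPerfectCfg.eq_zero_of_inner_self_eq_zero {S : Set F} (hS : IsPerfectCfg S)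
    {A : F →ₗ[ℝ] F} (hA : A.IsSymmetric) (h : ∀ x ∈ S, ⟪A x, x⟫ = 0) : A = 0 := by
  have hspan : Set.EqOn (LinearMap.trace ℝ F ∘ₗ LinearMap.mulLeft ℝ A)
      (0 : (F →ₗ[ℝ] F) →ₗ[ℝ] ℝ) (Submodule.span ℝ (projMap '' S)) := by
    refine LinearMap.eqOn_span ?_
    rintro _ ⟨x, hx, rfl⟩
    exact (trace_comp_projMap A x).trans (h x hx)
  have htrace : LinearMap.trace ℝ F (A ∘ₗ A) = 0 := hspan (hS A hA)
  let b := stdOrthonormalBasis ℝ F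
  rw [LinearMap.trace_eq_sum_inner _ b] at htrace
  simp only [LinearMap.comp_apply, ← hA (b _), real_inner_self_eq_norm_sq] at htrace
  rw [Finset.sum_eq_zero_iff_of_nonneg fun i _ => sq_nonneg _] at htrace
  exact b.toBasis.ext fun i => by simpa using htrace i

theorem finrank_mul_succ_le_two_mul_finrank_selfAdjoint :
    finrank ℝ F * (finrank ℝ F + 1) ≤ 2 * finrank ℝ (selfAdjoint.submodule ℝ (F →L[ℝ] F)) := by
  let b := stdOrthonormalBasis ℝ F
  let M : (Sym2 (Fin (finrank ℝ F)) → ℝ) →ₗ[ℝ]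
      Matrix (Fin (finrank ℝ F)) (Fin (finrank ℝ F)) ℝ :=
    { toFun f := Matrix.of fun i j => f s(i, j)
      map_add' _ _ := rfl
      map_smul' _ _ := rfl }
  have hM : Function.Injective M := fun f g hfg =>
    funext (Sym2.ind fun i j => congrFun (congrFun hfg i) j)
  let L : (Sym2 (Fin (finrank ℝ F)) → ℝ) →ₗ[ℝ] (F →L[ℝ] F) :=
    LinearMap.toContinuousLinearMap.toLinearMap ∘ₗ
      (Matrix.toLin b.toBasis b.toBasis).toLinearMap ∘ₗ M
  have hL : Function.Injective L :=
    LinearMap.toContinuousLinearMap.injective.comp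
      ((Matrix.toLin b.toBasis b.toBasis).injective.comp hM)
  have hrange : LinearMap.range L ≤ selfAdjoint.submodule ℝ (F →L[ℝ] F) := by
    rintro _ ⟨f, rfl⟩
    refine ContinuousLinearMap.isSelfAdjoint_iff_isSymmetric.2
      ((Matrix.isSymmetric_toLin_iff b).2 ?_)
    ext i j
    change f s(j, i) = f s(i, j)
    rw [Sym2.eq_swap]
  have hle := Submodule.finrank_mono hrange
  rw [LinearMap.finrank_range_of_inj hL, Module.finrank_fintype_fun_eq_card, Sym2.card,
    Fintype.card_fin, Nat.choose_two_right] at hle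
  have hdiv := Nat.mul_div_cancel' (Nat.even_mul_pred_self (finrank ℝ F + 1)).two_dvd
  rw [Nat.add_sub_cancel] at hle hdiv
  linarith

/-- The restriction to `H` of the quadratic form `x ↦ ⟪A x, x⟫` of a self-adjoint operator `A`, as a
linear map in `A`. Perfection of `H` makes it injective, and a dimension count then surjective, so
that the values on `H` can be prescribed. -/
def quadFormOn (H : Set F) : selfAdjoint.submodule ℝ (F →L[ℝ] F) →L[ℝ] (H → ℝ) where
  toFun A x := ⟪(A : F →L[ℝ] F) x, x⟫
  map_add' A B := by ext; simp [inner_add_left]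
  map_smul' c A := by ext; simp [real_inner_smul_left]
  cont := by fun_prop

theorem IsPerfectCfg.quadFormOn_injective {H : Set F} (hH : IsPerfectCfg H) :
    Function.Injective (quadFormOn H) := by
  refine (injective_iff_map_eq_zero _).2 fun A hA => ?_
  exact Subtype.ext <| ContinuousLinearMap.coe_injective <|
    hH.eq_zero_of_inner_self_eq_zero A.2.isSymmetric fun x hx => congrFun hA ⟨x, hx⟩

theorem IsPerfectCfg.quadFormOn_surjective {H : Set F} (hH : IsPerfectCfg H) (hfin : H.Finite)
    (hcard : 2 * H.ncard ≤ finrank ℝ F * (finrank ℝ F + 1)) :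
    Function.Surjective (quadFormOn H) := by
  have : Fintype H := hfin.fintype
  have hle := LinearMap.finrank_le_finrank_of_injective
    (f := (quadFormOn H).toLinearMap) hH.quadFormOn_injective
  refine (LinearMap.injective_iff_surjective_of_finrank_eq_finrank
    (f := (quadFormOn H).toLinearMap) (le_antisymm hle ?_)).1 hH.quadFormOn_injective
  rw [Module.finrank_fintype_fun_eq_card, ← Nat.card_eq_fintype_card, Nat.card_coe_set_eq]
  have := finrank_mul_succ_le_two_mul_finrank_selfAdjoint (F := F)
  omega

theorem IsPerfectCfg.exists_selfAdjoint_inner_eq {S : Set F} (hS : IsPerfectCfg S)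
    (hfin : S.Finite) (hcard : S.ncard ≤ finrank ℝ F * (finrank ℝ F + 1)) (h0 : 0 ∉ S)
    (hneg : ∀ x ∈ S, -x ∈ S) :
    ∃ C > 0, ∀ (c : F → ℝ) (M : ℝ), 0 ≤ M → c.Even → (∀ x ∈ S, |c x| ≤ M) →
      ∃ A : F →L[ℝ] F, IsSelfAdjoint A ∧ (∀ x ∈ S, ⟪A x, x⟫ = c x) ∧ ‖A‖ ≤ C * M := by
  have : IsAddTorsionFree F := .of_isTorsionFree ℝ F
  obtain ⟨H, hHS, hHcard, hHneg⟩ := exists_half_of_neg_mem hfin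
    (fun x hx hxx => h0 (neg_eq_self.1 hxx ▸ hx)) hneg
  have hHfin := hfin.subset hHS
  have hsurj := (hS.of_forall_mem_or_neg_mem hHneg).quadFormOn_surjective hHfin
    (hHcard.trans hcard)
  have : Fintype H := hHfin.fintype
  have : CompleteSpace (selfAdjoint.submodule ℝ (F →L[ℝ] F)) := FiniteDimensional.complete ℝ _
  obtain ⟨C, hC, hpre⟩ := ContinuousLinearMap.exists_preimage_norm_le (σ := .id ℝ) (σ' := .id ℝ)
    (E := selfAdjoint.submodule ℝ (F →L[ℝ] F)) (F := H → ℝ) (quadFormOn H) hsurj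
  refine ⟨C, hC, fun c M hM hc hcM => ?_⟩
  obtain ⟨A, hA, hAnorm⟩ := hpre fun x => c x
  have hAH (x : F) (hx : x ∈ H) : ⟪(A : F →L[ℝ] F) x, x⟫ = c x := congrFun hA ⟨x, hx⟩
  refine ⟨A, A.2, fun x hx => ?_, hAnorm.trans ?_⟩
  · rcases hHneg x hx with hxH | hxH
    · exact hAH x hxH
    · simpa [hc x] using hAH _ hxH
  · gcongr
    exact (pi_norm_le_iff_of_nonneg hM).2 fun x => hcM x (hHS x.2)

theorem IsPerfectCfg.exists_selfAdjoint_inner_eq_add_sum {s : Finset F}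
    (hs : IsPerfectCfg (s : Set F)) (hcard : s.card ≤ finrank ℝ F * (finrank ℝ F + 1))
    (h0 : 0 ∉ s) (hneg : ∀ x ∈ s, -x ∈ s) {η : ℝ} (hη : 0 ≤ η) :
    ∃ C > 0, ∀ ρ : F → ℝ, ρ.Even → ∃ A : F →L[ℝ] F, IsSelfAdjoint A ∧
      (∀ x ∈ s, ⟪A x, x⟫ = ρ x + η * ∑ y ∈ s, |ρ y|) ∧ ‖A‖ ≤ C * ∑ y ∈ s, |ρ y| := by
  obtain ⟨C, hC, hpre⟩ := hs.exists_selfAdjoint_inner_eq s.finite_toSet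
    (by rwa [Set.ncard_coe_finset]) h0 hneg
  refine ⟨C * (1 + η), by positivity, fun ρ hρ => ?_⟩
  set σ := ∑ y ∈ s, |ρ y|
  have hσ : 0 ≤ σ := Finset.sum_nonneg fun _ _ => abs_nonneg _
  rw [mul_assoc]
  refine hpre _ _ (by positivity) (fun x => by rw [hρ x]) fun x hx => ?_
  calc |ρ x + η * σ| ≤ |ρ x| + |η * σ| := abs_add_le _ _
    _ ≤ σ + η * σ := by
      rw [abs_of_nonneg (mul_nonneg hη hσ)]
      gcongr
      exact Finset.single_le_sum (f := fun y => |ρ y|) (fun _ _ => abs_nonneg _) hx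
    _ = (1 + η) * σ := by ring

end FiniteDimensional

end InnerProduct

section Lattice

variable {n : ℕ} {Λ : Set (Euc n)}

theorem IsLattice.exists_basis (hΛ : IsLattice Λ) :
    ∃ b : Module.Basis (Fin n) ℝ (Euc n), Λ = Submodule.span ℤ (Set.range b) := by
  obtain ⟨T, hT, rfl⟩ := hΛ
  refine ⟨(EuclideanSpace.basisFun (Fin n) ℝ).toBasis.map (LinearMap.equivOfDetNeZero T hT), ?_⟩
  ext v
  rw [SetLike.mem_coe, Submodule.mem_span_range_iff_exists_fun]
  simp [latticeSet, eq_comm, Int.cast_smul_eq_zsmul]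

theorem IsLattice.neg_mem (hΛ : IsLattice Λ) {x : Euc n} (hx : x ∈ Λ) : -x ∈ Λ := by
  obtain ⟨b, rfl⟩ := hΛ.exists_basis
  exact Submodule.neg_mem _ hx

theorem IsLattice.finite_inter_of_isBounded (hΛ : IsLattice Λ) {s : Set (Euc n)}
    (hs : Bornology.IsBounded s) : (s ∩ Λ).Finite := by
  obtain ⟨b, rfl⟩ := hΛ.exists_basis
  exact ZSpan.setFinite_inter b hs

theorem IsLattice.exists_norm_gap (hΛ : IsLattice Λ) (r : ℝ) :
    ∃ δ > 0, ∀ y ∈ Λ, r < ‖y‖ → r + δ ≤ ‖y‖ := by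
  have hfin : (closedBall 0 (r + 1) ∩ Λ).Finite := hΛ.finite_inter_of_isBounded isBounded_closedBall
  have hnear : ∀ᶠ δ in nhdsWithin (0 : ℝ) (Set.Ioi 0),
      ∀ y ∈ closedBall 0 (r + 1) ∩ Λ, r < ‖y‖ → r + δ ≤ ‖y‖ :=
    (Filter.eventually_all_finite hfin).2 fun y _ => Filter.eventually_imp_distrib_left.2 fun hy =>
      ((eventually_lt_nhds (sub_pos.2 hy)).filter_mono nhdsWithin_le_nhds).mono fun δ hδ => by
        linarith
  have hle : ∀ᶠ δ in nhdsWithin (0 : ℝ) (Set.Ioi 0), δ ≤ 1 :=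
    ((eventually_lt_nhds one_pos).filter_mono nhdsWithin_le_nhds).mono fun _ => le_of_lt
  obtain ⟨δ, ⟨hδ, hδ1⟩, hδ0⟩ := ((hnear.and hle).and self_mem_nhdsWithin).exists
  refine ⟨δ, hδ0, fun y hy hry => ?_⟩
  rcases le_or_gt ‖y‖ (r + 1) with hy1 | hy1
  · exact hδ y ⟨by simpa using hy1, hy⟩ hry
  · linarith

theorem image_latticeSet (B T : Euc n →ₗ[ℝ] Euc n) : B '' latticeSet T = latticeSet (B ∘ₗ T) := by
  ext v
  simp [latticeSet, eq_comm]

theorem IsLattice.image (hΛ : IsLattice Λ) {B : Euc n →ₗ[ℝ] Euc n} (hB : LinearMap.det B ≠ 0) :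
    IsLattice (B '' Λ) := by
  obtain ⟨T, hT, rfl⟩ := hΛ
  exact ⟨B ∘ₗ T, by simp [LinearMap.det_comp, hB, hT], image_latticeSet B T⟩

open scoped Pointwise in
theorem latDet_image (Λ : Set (Euc n)) {B : Euc n →ₗ[ℝ] Euc n} (hB : LinearMap.det B ≠ 0) :
    latDet (B '' Λ) = |LinearMap.det B| * latDet Λ := by
  let e := LinearMap.equivOfDetNeZero B hB
  have himage (T : Euc n →ₗ[ℝ] Euc n) :
      B '' Λ = latticeSet (B ∘ₗ T) ↔ Λ = latticeSet T := by
    rw [← image_latticeSet]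
    exact (Set.image_injective.2 e.injective).eq_iff
  rw [latDet, latDet, ← smul_eq_mul, ← Real.sInf_smul_of_nonneg (abs_nonneg _)]
  congr 1
  ext d
  rw [Set.mem_smul_set]
  constructor
  · rintro ⟨T, hT, rfl⟩
    have hBT : B ∘ₗ (e.symm.toLinearMap ∘ₗ T) = T := LinearMap.ext fun v => e.apply_symm_apply (T v)
    refine ⟨_, ⟨e.symm.toLinearMap ∘ₗ T, (himage _).1 (hBT.symm ▸ hT), rfl⟩, ?_⟩
    rw [smul_eq_mul, ← abs_mul, ← LinearMap.det_comp, hBT]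
  · rintro ⟨_, ⟨T, hT, rfl⟩, rfl⟩
    exact ⟨B ∘ₗ T, (himage T).2 hT, by rw [LinearMap.det_comp, abs_mul, smul_eq_mul]⟩

theorem latDet_image_div_le (Λ : Set (Euc n)) {B : Euc n →ₗ[ℝ] Euc n}
    (hB : LinearMap.det B ≠ 0) : latDet (B '' Λ) / latDet Λ ≤ |LinearMap.det B| := by
  rw [latDet_image Λ hB, mul_div_assoc]
  exact mul_le_of_le_one_right (abs_nonneg _) (div_self_le_one _)

theorem minNorm_le {x : Euc n} (hx : x ∈ Λ) (hx0 : x ≠ 0) : minNorm Λ ≤ ‖x‖ ^ 2 := by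
  refine csInf_le ⟨0, ?_⟩ ⟨x, hx, hx0, rfl⟩
  rintro _ ⟨y, _, _, rfl⟩
  positivity

theorem norm_eq_one_of_mem_minVecs (hmin : minNorm Λ = 1) {x : Euc n} (hx : x ∈ minVecs Λ) :
    ‖x‖ = 1 := by
  have := hx.2.2
  rwa [hmin, pow_eq_one_iff_of_nonneg (norm_nonneg x) two_ne_zero] at this

theorem one_lt_norm_of_notMem_minVecs (hmin : minNorm Λ = 1) {x : Euc n} (hx : x ∈ Λ)
    (hx0 : x ≠ 0) (hxS : x ∉ minVecs Λ) : 1 < ‖x‖ := by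
  refine (one_lt_sq_iff₀ (norm_nonneg x)).1 (lt_of_le_of_ne (hmin ▸ minNorm_le hx hx0) ?_)
  exact fun h => hxS ⟨hx, hx0, by rw [hmin, h]⟩

theorem IsLattice.neg_mem_minVecs (hΛ : IsLattice Λ) {x : Euc n} (hx : x ∈ minVecs Λ) :
    -x ∈ minVecs Λ :=
  ⟨hΛ.neg_mem hx.1, neg_ne_zero.2 hx.2.1, by rw [norm_neg, hx.2.2]⟩

theorem IsLattice.finite_minVecs (hΛ : IsLattice Λ) : (minVecs Λ).Finite := by
  refine (hΛ.finite_inter_of_isBounded (isBounded_closedBall (x := 0) (r := √(minNorm Λ)))).subset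
    fun x hx => ⟨?_, hx.1⟩
  rw [mem_closedBall_zero_iff, ← hx.2.2, Real.sqrt_sq (norm_nonneg x)]

end Lattice

section RadialFunction

variable {n : ℕ} {K : Set (Euc n)} {x : Euc n}

theorem radFn_neg (hK : -K = K) (x : Euc n) : radFn K (-x) = radFn K x := by
  unfold radFn
  congr! 4 with t
  rw [smul_neg, ← Set.mem_neg, hK]

theorem radFn_nonneg (K : Set (Euc n)) (x : Euc n) : 0 ≤ radFn K x :=
  Real.sSup_nonneg fun _ ht => ht.1

theorem radFn_le_of_subset_closedBall {R : ℝ} (hR : 0 ≤ R) (hK : K ⊆ closedBall 0 R)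
    (hx : ‖x‖ = 1) : radFn K x ≤ R := by
  refine Real.sSup_le (fun t ht => (le_abs_self t).trans ?_) hR
  simpa [norm_smul, hx] using hK ht.2

theorem le_radFn (hK : Bornology.IsBounded K) (hx : x ≠ 0) {t : ℝ} (ht : 0 ≤ t)
    (htK : t • x ∈ K) : t ≤ radFn K x := by
  obtain ⟨R, hR⟩ := hK.subset_closedBall 0
  refine le_csSup ⟨R / ‖x‖, fun s hs => ?_⟩ ⟨ht, htK⟩
  rw [le_div_iff₀ (norm_pos_iff.2 hx)]
  simpa [norm_smul, abs_of_nonneg hs.1] using hR hs.2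

theorem radFn_smul_notMem_interior (hK : Bornology.IsBounded K) (hx : x ≠ 0) :
    radFn K x • x ∉ interior K := by
  intro hmem
  have hcont : Filter.Tendsto (fun t : ℝ => t • x) (nhdsWithin (radFn K x) (Set.Ioi (radFn K x)))
      (nhds (radFn K x • x)) :=
    (Continuous.tendsto (by fun_prop) _).mono_left nhdsWithin_le_nhds
  obtain ⟨t, htK, ht⟩ :=
    ((hcont.eventually (isOpen_interior.mem_nhds hmem)).and self_mem_nhdsWithin).exists
  exact (le_radFn hK hx ((radFn_nonneg K x).trans (le_of_lt ht)) (interior_subset htK)).not_gt ht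

variable {ε : ℝ}

theorem abs_radFn_sub_one_le (hε0 : 0 ≤ ε) (hε1 : ε ≤ 1) (hin : closedBall 0 (1 - ε) ⊆ K)
    (hout : K ⊆ closedBall 0 (1 + ε)) (hx : ‖x‖ = 1) : |radFn K x - 1| ≤ ε := by
  have hlower : 1 - ε ≤ radFn K x := by
    refine le_radFn (isBounded_closedBall.subset hout) (norm_ne_zero_iff.1 (by simp [hx]))
      (by linarith) (hin ?_)
    simp [norm_smul, hx, abs_of_nonneg (sub_nonneg.2 hε1)]
  have hupper := radFn_le_of_subset_closedBall (by linarith) hout hx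
  exact abs_le.2 ⟨by linarith, by linarith⟩

theorem exists_normal_near_of_closedBall_subset (hK : Convex ℝ K) (hε0 : 0 ≤ ε) (hε1 : ε < 1)
    (hin : closedBall 0 (1 - ε) ⊆ K) (hout : K ⊆ closedBall 0 (1 + ε)) (hx : ‖x‖ = 1) :
    ∃ u : Euc n, ‖u - x‖ ≤ 2 * √ε ∧ ∀ y ∈ interior K, ⟪y, u⟫ < ⟪radFn K x • x, u⟫ := by
  have hint : (interior K).Nonempty := ⟨0, interior_mono hin <|
    ball_subset_interior_closedBall (mem_ball_self (sub_pos.2 hε1))⟩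
  obtain ⟨u, hu, hKu⟩ := exists_unit_inner_lt_of_notMem_interior hK hint <|
    radFn_smul_notMem_interior (isBounded_closedBall.subset hout)
      (norm_ne_zero_iff.1 (by simp [hx]) : x ≠ 0)
  have hwidth := le_of_forall_interior_inner_lt (sub_pos.2 hε1) hin hu hKu
  rw [real_inner_smul_left] at hwidth
  exact ⟨u, norm_sub_le_two_mul_sqrt hx hu hε0 hε1 (radFn_nonneg K x)
    (radFn_le_of_subset_closedBall (by linarith) hout hx) hwidth, hKu⟩

theorem radFn_smul_add_notMem_interior (hK : Convex ℝ K) (hε0 : 0 ≤ ε) (hε1 : ε < 1)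
    (hin : closedBall 0 (1 - ε) ⊆ K) (hout : K ⊆ closedBall 0 (1 + ε)) (hx : ‖x‖ = 1)
    {q : Euc n} (hq : ‖q‖ * (2 * √ε) ≤ ⟪q, x⟫) : radFn K x • x + q ∉ interior K := by
  intro hmem
  obtain ⟨u, hux, hKu⟩ := exists_normal_near_of_closedBall_subset hK hε0 hε1 hin hout hx
  have hneg : ⟪q, u⟫ < 0 := by simpa [inner_add_left] using hKu _ hmem
  have hclose : |⟪q, u - x⟫| ≤ ‖q‖ * (2 * √ε) :=
    (abs_real_inner_le_norm _ _).trans (by gcongr)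
  rw [inner_sub_right] at hclose
  linarith [neg_le_of_abs_le hclose]

end RadialFunction

section Deformation

variable {n : ℕ} {Λ K : Set (Euc n)} {A : Euc n →L[ℝ] Euc n} {C δ ε η σ : ℝ}

theorem add_notMem_interior_of_inner_le {x v : Euc n} (hK : Convex ℝ K) (hε0 : 0 ≤ ε) (hε1 : ε < 1)
    (hin : closedBall 0 (1 - ε) ⊆ K) (hout : K ⊆ closedBall 0 (1 + ε)) (hx : ‖x‖ = 1)
    (hv : (‖v‖ + |radFn K x - 1|) * (2 * √ε) ≤ ⟪v, x⟫ - (radFn K x - 1)) :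
    x + v ∉ interior K := by
  set ρ := radFn K x - 1 with hρ
  have hnorm : ‖v - ρ • x‖ ≤ ‖v‖ + |ρ| := by
    simpa [norm_smul, hx] using norm_sub_le v (ρ • x)
  have hinner : ⟪v - ρ • x, x⟫ = ⟪v, x⟫ - ρ := by
    simp [inner_sub_left, real_inner_smul_left, hx]
  have hsplit : x + v = radFn K x • x + (v - ρ • x) := by
    rw [hρ, sub_smul, one_smul]
    abel
  rw [hsplit]
  refine radFn_smul_add_notMem_interior hK hε0 hε1 hin hout hx ?_
  rw [hinner]
  exact (mul_le_mul_of_nonneg_right hnorm (by positivity)).trans hv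

theorem one_sub_opNorm_mul_norm_le {E : Type*} [NormedAddCommGroup E] [NormedSpace ℝ E]
    (A : E →L[ℝ] E) (y : E) : (1 - ‖A‖) * ‖y‖ ≤ ‖y + A y‖ := by
  linarith [A.le_opNorm y, norm_sub_le_norm_add y (A y)]

theorem isAdmissible_image_one_add (hmin : minNorm Λ = 1)
    (hgap : ∀ y ∈ Λ, 1 < ‖y‖ → 1 + δ ≤ ‖y‖) (hK : Convex ℝ K) (hε0 : 0 ≤ ε) (hε1 : ε < 1)
    (hin : closedBall 0 (1 - ε) ⊆ K) (hout : K ⊆ closedBall 0 (1 + ε)) (hA1 : ‖A‖ ≤ 1)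
    (hAσ : ‖A‖ ≤ C * σ) (hρσ : ∀ x ∈ minVecs Λ, |radFn K x - 1| ≤ σ)
    (hval : ∀ x ∈ minVecs Λ, ⟪A x, x⟫ = radFn K x - 1 + η * σ) (hη : (C + 1) * (2 * √ε) ≤ η)
    (hlong : 1 + ε < (1 - ‖A‖) * (1 + δ)) :
    IsAdmissible (⇑(1 + A) '' Λ) K := by
  rintro _ ⟨⟨y, hy, rfl⟩, hyK⟩
  rw [Set.mem_singleton_iff]
  by_contra hne
  have hy0 : y ≠ 0 := by
    rintro rfl
    exact hne (map_zero _)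
  by_cases hyS : y ∈ minVecs Λ
  · have hy1 := norm_eq_one_of_mem_minVecs hmin hyS
    refine add_notMem_interior_of_inner_le hK hε0 hε1 hin hout hy1 (v := A y) ?_ hyK
    have hσ : 0 ≤ σ := (abs_nonneg _).trans (hρσ y hyS)
    have hAy : ‖A y‖ ≤ C * σ := (A.unit_le_opNorm y hy1.le).trans hAσ
    calc (‖A y‖ + |radFn K y - 1|) * (2 * √ε) ≤ (C * σ + σ) * (2 * √ε) := by
          gcongr
          exact hρσ y hyS
      _ = (C + 1) * (2 * √ε) * σ := by ring
      _ ≤ η * σ := by gcongr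
      _ = ⟪A y, y⟫ - (radFn K y - 1) := by rw [hval y hyS, add_sub_cancel_left]
  · have hupper : ‖y + A y‖ ≤ 1 + ε := by simpa using hout (interior_subset hyK)
    have hlower : (1 - ‖A‖) * (1 + δ) ≤ (1 - ‖A‖) * ‖y‖ :=
      mul_le_mul_of_nonneg_left
        (hgap y hy (one_lt_norm_of_notMem_minVecs hmin hy hy0 hyS)) (sub_nonneg.2 hA1)
    linarith [one_sub_opNorm_mul_norm_le A y]

theorem exists_pos_small_parameter {δ η τ : ℝ} (hδ : 0 < δ) (hη : 0 < η) (hτ : 0 < τ)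
    (C N d : ℝ) :
    ∃ ε > 0, ε < 1 ∧ 1 + ε < (1 - C * (N * ε)) * (1 + δ) ∧ (C + 1) * (2 * √ε) ≤ η ∧
      d * (C * (N * ε)) ≤ 1 ∧ d ^ 2 * C * (C * (N * ε)) ≤ τ := by
  have eventually_lt {f g : ℝ → ℝ} (hf : Continuous f) (hg : Continuous g) (h : f 0 < g 0) :
      ∀ᶠ ε in nhdsWithin 0 (Set.Ioi 0), f ε < g ε :=
    (hf.continuousAt.eventually_lt hg.continuousAt h).filter_mono nhdsWithin_le_nhds
  obtain ⟨ε, hε0, hε1, hgap, hcap, htrace, hquad⟩ :=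
    ((eventually_mem_nhdsWithin (s := Set.Ioi (0 : ℝ))).and <|
    (eventually_lt (f := id) (g := 1) (by fun_prop) (by fun_prop) (by simp)).and <|
    (eventually_lt (f := fun ε => 1 + ε) (g := fun ε => (1 - C * (N * ε)) * (1 + δ))
      (by fun_prop) (by fun_prop) (by simpa)).and <|
    (eventually_lt (f := fun ε => (C + 1) * (2 * √ε)) (g := fun _ => η)
      (by fun_prop) (by fun_prop) (by simpa)).and <|
    (eventually_lt (f := fun ε => d * (C * (N * ε))) (g := 1)
      (by fun_prop) (by fun_prop) (by simp)).and <|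
    eventually_lt (f := fun ε => d ^ 2 * C * (C * (N * ε))) (g := fun _ => τ)
      (by fun_prop) (by fun_prop) (by simpa)).exists
  exact ⟨ε, hε0, hε1, hgap, hcap.le, htrace.le, hquad.le⟩

theorem IsLattice.exists_isAdmissible_latDet_div_le (hΛ : IsLattice Λ) (hmin : minNorm Λ = 1)
    {s : Finset (Euc n)} (hs : (s : Set (Euc n)) = minVecs Λ) (hcard : s.card ≤ n * (n + 1))
    (hperfect : IsPerfectCfg (s : Set (Euc n))) {υ : Euc n → ℝ}
    (hυ : ∑ x ∈ s, υ x • projMap x = (LinearMap.id : Euc n →ₗ[ℝ] Euc n)) {τ : ℝ} (hτ : 0 < τ) :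
    ∃ ε > 0, ∀ K : Set (Euc n), Convex ℝ K → -K = K →
      closedBall 0 (1 - ε) ⊆ K → K ⊆ closedBall 0 (1 + ε) →
      ∃ Λ' : Set (Euc n), IsLattice Λ' ∧ IsAdmissible Λ' K ∧
        latDet Λ' / latDet Λ ≤
          1 + ∑ x ∈ s, υ x * (radFn K x - 1) + τ * ∑ x ∈ s, |radFn K x - 1| := by
  have hmem {x : Euc n} : x ∈ s ↔ x ∈ minVecs Λ := by rw [← hs, Finset.mem_coe]
  have hunit : ∀ x ∈ s, ‖x‖ = 1 := fun x hx => norm_eq_one_of_mem_minVecs hmin (hmem.1 hx)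
  obtain ⟨η, hη, hnη⟩ : ∃ η > 0, n * η ≤ τ / 2 :=
    ⟨τ / (2 * (n + 1)), by positivity, by field_simp; linarith⟩
  obtain ⟨C, hC, hdeform⟩ := hperfect.exists_selfAdjoint_inner_eq_add_sum
    (by rwa [finrank_euclideanSpace_fin]) (fun h0 => (hmem.1 h0).2.1 rfl)
    (fun x hx => hmem.2 (hΛ.neg_mem_minVecs (hmem.1 hx))) hη.le
  obtain ⟨δ, hδ, hgap⟩ := hΛ.exists_norm_gap 1
  obtain ⟨ε, hε0, hε1, hlong, hcap, htrace, hquad⟩ :=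
    exists_pos_small_parameter hδ hη (half_pos hτ) C s.card n
  refine ⟨ε, hε0, fun K hK hKneg hin hout => ?_⟩
  obtain ⟨A, hA, hAval, hAnorm⟩ := hdeform (fun x => radFn K x - 1) fun x => by
    simp only [radFn_neg hKneg]
  set σ := ∑ x ∈ s, |radFn K x - 1|
  have hρσ : ∀ x ∈ s, |radFn K x - 1| ≤ σ := fun x hx =>
    Finset.single_le_sum (f := fun x => |radFn K x - 1|) (fun _ _ => abs_nonneg _) hx
  have hσε : σ ≤ s.card * ε := by
    rw [← nsmul_eq_mul]
    exact Finset.sum_le_card_nsmul _ _ _ fun x hx =>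
      abs_radFn_sub_one_le hε0.le hε1.le hin hout (hunit x hx)
  have hσ0 : 0 ≤ σ := Finset.sum_nonneg fun _ _ => abs_nonneg _
  have hAsmall : ‖A‖ ≤ C * (s.card * ε) := hAnorm.trans (by gcongr)
  have hA1 : ‖A‖ < 1 := hAsmall.trans_lt <| sub_pos.1 <|
    pos_of_mul_pos_left (lt_trans (by positivity) hlong) (by positivity)
  have hdet := det_one_add_ne_zero hA1
  refine ⟨⇑(1 + A) '' Λ, hΛ.image hdet, ?_, (latDet_image_div_le Λ hdet).trans ?_⟩
  · exact isAdmissible_image_one_add hmin hgap hK hε0.le hε1 hin hout hA1.le hAnorm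
      (fun x hx => hρσ x (hmem.2 hx)) (fun x hx => hAval x (hmem.2 hx)) hcap
      (hlong.trans_le (by gcongr))
  · exact abs_det_one_add_le_of_eutaxy_of_le hunit hυ hA hA1.le hAval hC.le hσ0 hAnorm hAsmall
      (by simpa using htrace) (by simpa using hnη) (by simpa using hquad)

end Deformation

theorem admissible_lattice_radial_bound_general {n : ℕ} {Λ₀ : Set (Euc n)} (hΛ : IsLattice Λ₀)
    (hmin : minNorm Λ₀ = 1) (hcard : (minVecs Λ₀).ncard ≤ n * (n + 1))
    (hperfect : IsPerfectCfg (minVecs Λ₀)) {υ : Euc n → ℝ} (hzero : ∀ x ∉ minVecs Λ₀, υ x = 0)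
    (heutaxy : ∑ᶠ x, υ x • projMap x = (LinearMap.id : Euc n →ₗ[ℝ] Euc n)) :
    ∀ ε' > (0 : ℝ), ∃ ε > (0 : ℝ), ∀ K : Set (Euc n), Convex ℝ K → -K = K →
      closedBall 0 (1 - ε) ⊆ K → K ⊆ closedBall 0 (1 + ε) →
      ∃ Λ' : Set (Euc n), IsLattice Λ' ∧ IsAdmissible Λ' K ∧
        latDet Λ' / latDet Λ₀ ≤
          1 + (∑ᶠ x ∈ minVecs Λ₀, υ x * (radFn K x - 1)) +
            ε' * ∑ᶠ x ∈ minVecs Λ₀, |radFn K x - 1| := by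
  intro τ hτ
  obtain ⟨s, hs⟩ := hΛ.finite_minVecs.exists_finset_coe
  have hυ : ∑ x ∈ s, υ x • projMap x = (LinearMap.id : Euc n →ₗ[ℝ] Euc n) := by
    rw [← heutaxy]
    refine (finsum_eq_sum_of_support_subset _ fun x hx => ?_).symm
    rw [hs]
    by_contra hxS
    simp [hzero x hxS] at hx
  simp only [← hs, Set.ncard_coe_finset, finsum_mem_coe_finset] at hcard hperfect ⊢
  exact hΛ.exists_isAdmissible_latDet_div_le hmin hs hcard hperfect hυ hτ

/-- Theorem 3.9(ii): if the critical lattice `Λ₀` of `Bⁿ`, unique up to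
rotation, is minimally extreme with eutaxy coefficients `υ`, then for every `ε' > 0`, every
sufficiently spherical body `K` admits an admissible lattice `Λ'` with
`d(Λ')/d(Λ₀) ≤ 1 + Σ υ_x ρ_x + ε' Σ |ρ_x|` where `ρ_x = r_K(x) - 1`. -/
theorem admissible_lattice_radial_bound (n : ℕ) (hn : 2 ≤ n) (Λ₀ : Set (Euc n))
    (hcrit : IsCriticalLattice Λ₀ (unitBall n))
    (huniq : ∀ Λ : Set (Euc n), IsCriticalLattice Λ (unitBall n) →
      ∃ U : Euc n ≃ₗᵢ[ℝ] Euc n, Λ = ⇑U '' Λ₀)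
    (hmin : minNorm Λ₀ = 1)
    (hcard : (minVecs Λ₀).ncard = n * (n + 1))
    (hperfect : IsPerfectCfg (minVecs Λ₀))
    (υ : Euc n → ℝ)
    (hpos : ∀ x ∈ minVecs Λ₀, 0 < υ x) (hzero : ∀ x ∉ minVecs Λ₀, υ x = 0)
    (hυsym : ∀ x, υ x = υ (-x))
    (heutaxy : ∑ᶠ x, υ x • projMap x = (LinearMap.id : Euc n →ₗ[ℝ] Euc n)) :
    ∀ ε' > (0 : ℝ), ∃ ε > (0 : ℝ), ∀ K : Set (Euc n), IsSymCB K →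
      Metric.closedBall 0 (1 - ε) ⊆ K → K ⊆ Metric.closedBall 0 (1 + ε) →
      ∃ Λ' : Set (Euc n), IsLattice Λ' ∧ IsAdmissible Λ' K ∧
        latDet Λ' / latDet Λ₀ ≤
          1 + (∑ᶠ x ∈ minVecs Λ₀, υ x * (radFn K x - 1)) +
            ε' * ∑ᶠ x ∈ minVecs Λ₀, |radFn K x - 1| := by
  intro ε' hε'
  obtain ⟨ε, hε, h⟩ :=
    admissible_lattice_radial_bound_general hcrit.1 hmin hcard.le hperfect hzero heutaxy ε' hε'
  exact ⟨ε, hε, fun K hK => h K hK.convex hK.symm⟩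

end
end

section
/- Given ε > 0, there exists ε' > 0 such that if K ⊂ ℝ³ is an origin-symmetric convex body with (1−ε')B³ ⊆ K ⊆ (1+ε')B³, then there is an invertible linear map T : ℝ³ → ℝ³ such that K' = TK satisfies (1−ε)B³ ⊆ K' ⊆ (1+ε)B³, ∫_{S²} r_{K'}(x) dσ(x) = 1, and ∫_{S²} r_{K'}(x) ⟨x, Ax⟩ dσ(x) = 0 for every symmetric linear map A : ℝ³ → ℝ³ with trace A = 0 (i.e., the radial function of K' has mean 1 and vanishing second spherical harmonic component). -/
open scoped RealInnerProductSpace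
open Metric MeasureTheory

noncomputable section

/-!
Let `T = S⁻¹` with `S` close to `1`. The radial function of `T K = S⁻¹ K` is `1 / gauge K (S x)`, so
the problem is to find `S` such that `1 / gauge K (S x) - 1` is orthogonal on the sphere to every
form `⟪x, A x⟫` with `A` symmetric. The gauge of `K` is convex and within `δ ^ 2` of the norm, and
convexity upgrades this `C⁰` closeness to closeness of increments: up to a Lipschitz error of order
`δ`, `1 / gauge K (S x)` depends on `S` through `-⟪x, S x⟫` alone. A symmetric `S` can be recovered
from the form `⟪x, S x⟫` by integrating it against an explicit operator-valued kernel, as the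
fourth moments of `σ` show. Hence a simplified Newton iteration is a contraction near `1`.
-/

open Function Set
open Module (finrank)
open scoped NNReal
open InnerProductSpace (rankOne)

section FixedPoint

variable {X : Type*} [MetricSpace X] [CompleteSpace X]

theorem exists_isFixedPt_mem_closedBall {g : X → X} {a : X} {r : ℝ} {k : ℝ≥0} (hk : k < 1)
    (hr : 0 ≤ r) (hg : LipschitzOnWith k g (closedBall a r)) (ha : dist (g a) a ≤ (1 - k) * r) :
    ∃ x ∈ closedBall a r, IsFixedPt g x := by
  have ha_mem : a ∈ closedBall a r := mem_closedBall_self hr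
  have hmaps : MapsTo g (closedBall a r) (closedBall a r) := fun x hx ↦
    calc dist (g x) a ≤ dist (g x) (g a) + dist (g a) a := dist_triangle _ _ _
      _ ≤ k * r + (1 - k) * r := by
        gcongr
        exact (hg.dist_le_mul x hx a ha_mem).trans (by gcongr; exact hx)
      _ = r := by ring
  have hcontr : ContractingWith k (hmaps.restrict g _ _) := ⟨hk, hg.mapsToRestrict hmaps⟩
  obtain ⟨x, hx, hfix, -⟩ :=
    hcontr.exists_fixedPoint' isClosed_closedBall.isComplete hmaps ha_mem (edist_ne_top _ _)
  exact ⟨x, hx, hfix⟩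

end FixedPoint

section NearNorm

theorem mul_sub_le_extrapolate_sub {V : Type*} [AddCommGroup V] [Module ℝ V] {s : Set V}
    {f : V → ℝ} (hf : ConvexOn ℝ s f) {t : ℝ} (ht : 0 ≤ t) {u v : V} (hv : v ∈ s)
    (hw : u + t • (u - v) ∈ s) : t * (f u - f v) ≤ f (u + t • (u - v)) - f u := by
  have ht' : 0 < 1 + t := by positivity
  have hu : (t / (1 + t)) • v + (1 / (1 + t)) • (u + t • (u - v)) = u := by
    match_scalars <;> field_simp
    ring
  have hconv := hf.2 hv hw (show 0 ≤ t / (1 + t) by positivity)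
    (show 0 ≤ 1 / (1 + t) by positivity) (by field_simp; ring)
  rw [hu, smul_eq_mul, smul_eq_mul] at hconv
  field_simp at hconv
  linarith

theorem abs_inv_sub_inv_add_le {p q d : ℝ} (hpq : 1 / 2 ≤ p * q) :
    |p⁻¹ - q⁻¹ + d| ≤ 2 * (|d| * |p * q - 1| + |p - q - d|) := by
  have hpos : 0 < p * q := by linarith
  have hp : p ≠ 0 := left_ne_zero_of_mul hpos.ne'
  have hq : q ≠ 0 := right_ne_zero_of_mul hpos.ne'
  have key : p⁻¹ - q⁻¹ + d = (d * (p * q - 1) - (p - q - d)) / (p * q) := by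
    field_simp; ring
  rw [key, abs_div, abs_of_pos hpos, div_le_iff₀ hpos, ← abs_mul]
  have := abs_sub (d * (p * q - 1)) (p - q - d)
  nlinarith [abs_nonneg (d * (p * q - 1)), abs_nonneg (p - q - d)]

theorem abs_sub_one_le_of_near_norm {V : Type*} [SeminormedAddCommGroup V] {f : V → ℝ} {δ : ℝ}
    {x u : V} (hδ : δ ≤ 1 / 10) (hnorm : ∀ u, |f u - ‖u‖| ≤ δ ^ 2 * ‖u‖) (hx : ‖x‖ = 1)
    (hu : u ∈ closedBall x δ) :
    |f u - 1| ≤ 2 * δ := by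
  rw [mem_closedBall, dist_eq_norm] at hu
  have hδ₀ : 0 ≤ δ := (norm_nonneg _).trans hu
  have hu' : |‖u‖ - 1| ≤ δ := hx ▸ (abs_norm_sub_norm_le u x).trans hu
  have hfu := hnorm u
  rw [abs_le] at hu' hfu ⊢
  constructor <;> nlinarith

variable {E : Type*} [NormedAddCommGroup E] [InnerProductSpace ℝ E]

theorem norm_sub_norm_le_inner_add {x : E} (hx : ‖x‖ = 1) (w u : E) :
    ‖w‖ - ‖u‖ ≤ ⟪x, w - u⟫ + 2 * ‖w - x‖ * ‖w - u‖ := by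
  have hsupport : ‖w‖ * (‖w‖ - ‖u‖) ≤ ⟪w, w - u⟫ := by
    rw [inner_sub_right, real_inner_self_eq_norm_sq]
    linarith [real_inner_le_norm w u]
  have hsplit : ⟪w, w - u⟫ = ⟪x, w - u⟫ + ⟪w - x, w - u⟫ := by
    rw [← inner_add_left, add_sub_cancel]
  have hcs : ⟪w - x, w - u⟫ ≤ ‖w - x‖ * ‖w - u‖ := real_inner_le_norm _ _
  have hdefect : (1 - ‖w‖) * (‖w‖ - ‖u‖) ≤ ‖w - x‖ * ‖w - u‖ :=
    calc (1 - ‖w‖) * (‖w‖ - ‖u‖) ≤ |1 - ‖w‖| * |‖w‖ - ‖u‖| := by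
          rw [← abs_mul]; exact le_abs_self _
      _ ≤ ‖w - x‖ * ‖w - u‖ := by
        gcongr
        · rw [← hx, abs_sub_comm]; exact abs_norm_sub_norm_le w x
        · exact abs_norm_sub_norm_le w u
  linarith

variable {f : E → ℝ} {δ : ℝ} {x u v : E}

theorem sub_le_inner_add_of_near_norm (hf : ConvexOn ℝ univ f) (hδ₀ : 0 < δ) (hδ : δ ≤ 1 / 10)
    (hnorm : ∀ u, |f u - ‖u‖| ≤ δ ^ 2 * ‖u‖) (hx : ‖x‖ = 1) (hu : u ∈ closedBall x δ) (v : E) :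
    f u - f v ≤ ⟪x, u - v⟫ + 7 * δ * ‖u - v‖ := by
  rcases eq_or_ne u v with rfl | huv
  · simp
  have hdist : 0 < ‖u - v‖ := norm_sub_pos_iff.2 huv
  rw [mem_closedBall, dist_eq_norm] at hu
  -- Extrapolating the segment from `v` to `u` by a step of length `δ` makes the `δ ^ 2` error in
  -- the values of `f` an error of order `δ` in its slope.
  obtain ⟨t, ht, htδ⟩ : ∃ t, 0 < t ∧ t * ‖u - v‖ = δ :=
    ⟨δ / ‖u - v‖, by positivity, by field_simp⟩
  set w := u + t • (u - v)
  have hwu : w - u = t • (u - v) := by simp [w]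
  have hwu_norm : ‖w - u‖ = δ := by rw [hwu, norm_smul, Real.norm_of_nonneg ht.le, htδ]
  have hwx : ‖w - x‖ ≤ 2 * δ := by linarith [norm_sub_le_norm_sub_add_norm_sub w u x]
  have hconv : t * (f u - f v) ≤ f w - f u :=
    mul_sub_le_extrapolate_sub hf ht.le (mem_univ _) (mem_univ _)
  have hnorms : ‖w‖ + ‖u‖ ≤ 3 := by
    linarith [norm_le_norm_add_norm_sub' w x, norm_le_norm_add_norm_sub' u x]
  have hfw : f w - f u ≤ ‖w‖ - ‖u‖ + 3 * δ ^ 2 := by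
    have hw_le := (abs_le.1 (hnorm w)).2
    have hu_le := (abs_le.1 (hnorm u)).1
    nlinarith [sq_nonneg δ]
  have hslope : ‖w‖ - ‖u‖ ≤ t * ⟪x, u - v⟫ + 4 * δ ^ 2 := by
    have := norm_sub_norm_le_inner_add hx w u
    rw [hwu_norm, hwu, real_inner_smul_right] at this
    nlinarith
  refine le_of_mul_le_mul_left ?_ ht
  calc t * (f u - f v) ≤ t * ⟪x, u - v⟫ + 7 * δ * δ := by linarith
    _ = t * (⟪x, u - v⟫ + 7 * δ * ‖u - v‖) := by rw [← htδ]; ring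

theorem abs_sub_sub_inner_le_of_near_norm (hf : ConvexOn ℝ univ f) (hδ₀ : 0 < δ)
    (hδ : δ ≤ 1 / 10) (hnorm : ∀ u, |f u - ‖u‖| ≤ δ ^ 2 * ‖u‖) (hx : ‖x‖ = 1)
    (hu : u ∈ closedBall x δ) (hv : v ∈ closedBall x δ) :
    |f u - f v - ⟪x, u - v⟫| ≤ 7 * δ * ‖u - v‖ := by
  have huv := sub_le_inner_add_of_near_norm hf hδ₀ hδ hnorm hx hu v
  have hvu := sub_le_inner_add_of_near_norm hf hδ₀ hδ hnorm hx hv u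
  rw [← neg_sub u v, inner_neg_right, norm_neg] at hvu
  rw [abs_le]
  constructor <;> linarith

theorem abs_inv_sub_inv_add_inner_le_of_near_norm (hf : ConvexOn ℝ univ f) (hδ₀ : 0 < δ)
    (hδ : δ ≤ 1 / 10) (hnorm : ∀ u, |f u - ‖u‖| ≤ δ ^ 2 * ‖u‖) (hx : ‖x‖ = 1)
    (hu : u ∈ closedBall x δ) (hv : v ∈ closedBall x δ) :
    |(f u)⁻¹ - (f v)⁻¹ + ⟪x, u - v⟫| ≤ 24 * δ * ‖u - v‖ := by
  have hfu := abs_le.1 (abs_sub_one_le_of_near_norm hδ hnorm hx hu)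
  have hfv := abs_le.1 (abs_sub_one_le_of_near_norm hδ hnorm hx hv)
  have hprod : |f u * f v - 1| ≤ 5 * δ := by
    rw [abs_le]
    constructor <;> nlinarith
  have hinner : |⟪x, u - v⟫| ≤ ‖u - v‖ := by
    simpa [hx] using abs_real_inner_le_norm x (u - v)
  have hslope := abs_sub_sub_inner_le_of_near_norm hf hδ₀ hδ hnorm hx hu hv
  calc |(f u)⁻¹ - (f v)⁻¹ + ⟪x, u - v⟫|
      ≤ 2 * (|⟪x, u - v⟫| * |f u * f v - 1| + |f u - f v - ⟪x, u - v⟫|) :=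
        abs_inv_sub_inv_add_le (by linarith [(abs_le.1 hprod).1])
    _ ≤ 2 * (‖u - v‖ * (5 * δ) + 7 * δ * ‖u - v‖) := by gcongr
    _ = 24 * δ * ‖u - v‖ := by ring

end NearNorm

section Moments

theorem integrable_of_continuousOn_sphere {V F : Type*} [NormedAddCommGroup V] [ProperSpace V]
    [MeasurableSpace V] [OpensMeasurableSpace V] [NormedAddCommGroup F] {σ : Measure V}
    [IsFiniteMeasure σ] (hσ : ∀ᵐ x ∂σ, ‖x‖ = 1) {g : V → F}
    (hg : ContinuousOn g (sphere 0 1)) : Integrable g σ := by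
  have hrestrict : σ.restrict (sphere 0 1) = σ :=
    Measure.restrict_eq_self_of_ae_mem (hσ.mono fun x hx ↦ mem_sphere_zero_iff_norm.2 hx)
  rw [← hrestrict]
  exact hg.integrableOn_compact (isCompact_sphere 0 1)

theorem finrank_pos_of_norm_eq_one {V : Type*} [NormedAddCommGroup V] [NormedSpace ℝ V]
    [FiniteDimensional ℝ V] {e : V} (he : ‖e‖ = 1) : 0 < finrank ℝ V := by
  have : Nontrivial V := nontrivial_of_ne e 0 (norm_ne_zero_iff.1 (by simp [he]))
  exact Module.finrank_pos

theorem inner_map_self_eq_sum_eigenvalues {E : Type*} [NormedAddCommGroup E]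
    [InnerProductSpace ℝ E] [FiniteDimensional ℝ E] {S : E →ₗ[ℝ] E} (hS : S.IsSymmetric) (x : E) :
    ⟪x, S x⟫ = ∑ i, hS.eigenvalues rfl i * ⟪x, hS.eigenvectorBasis rfl i⟫ ^ 2 := by
  rw [← (hS.eigenvectorBasis rfl).sum_inner_mul_inner]
  refine Finset.sum_congr rfl fun i _ ↦ ?_
  rw [← hS, hS.apply_eigenvectorBasis, RCLike.ofReal_real_eq_id, id, real_inner_smul_left,
    real_inner_comm]
  ring

variable {E : Type*} [NormedAddCommGroup E] [InnerProductSpace ℝ E] [MeasurableSpace E]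
  [BorelSpace E] {σ : Measure E}

theorem integral_comp_inner_eq_of_norm_eq {F : Type*} [NormedAddCommGroup F] [NormedSpace ℝ F]
    (hinv : ∀ U : E ≃ₗᵢ[ℝ] E, σ.map U = σ) (φ : ℝ → F) {u v : E} (huv : ‖u‖ = ‖v‖) :
    ∫ x, φ ⟪x, u⟫ ∂σ = ∫ x, φ ⟪x, v⟫ ∂σ := by
  let U := (ℝ ∙ (v - u))ᗮ.reflection
  have hU : U v = u := Submodule.reflection_sub huv.symm
  calc ∫ x, φ ⟪x, u⟫ ∂σ = ∫ x, φ ⟪x, u⟫ ∂σ.map U := by rw [hinv]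
    _ = ∫ x, φ ⟪U x, U v⟫ ∂σ := by
      have hmeas : MeasurableEmbedding U := U.toHomeomorph.measurableEmbedding
      rw [hmeas.integral_map, hU]
    _ = ∫ x, φ ⟪x, v⟫ ∂σ := by simp only [U.inner_map_map]

theorem norm_pow_mul_integral_inner_pow (hinv : ∀ U : E ≃ₗᵢ[ℝ] E, σ.map U = σ) (k : ℕ) (u v : E) :
    ‖v‖ ^ k * ∫ x, ⟪x, u⟫ ^ k ∂σ = ‖u‖ ^ k * ∫ x, ⟪x, v⟫ ^ k ∂σ := by
  have hnorm : ‖‖v‖ • u‖ = ‖‖u‖ • v‖ := by simp [norm_smul, mul_comm]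
  simpa only [real_inner_smul_right, mul_pow, integral_const_mul] using
    integral_comp_inner_eq_of_norm_eq hinv (· ^ k) hnorm

variable [FiniteDimensional ℝ E] [IsProbabilityMeasure σ]

theorem finrank_mul_integral_inner_sq (hσ : ∀ᵐ x ∂σ, ‖x‖ = 1)
    (hinv : ∀ U : E ≃ₗᵢ[ℝ] E, σ.map U = σ) (u : E) :
    finrank ℝ E * ∫ x, ⟪x, u⟫ ^ 2 ∂σ = ‖u‖ ^ 2 := by
  let b := stdOrthonormalBasis ℝ E
  have hsum : ∑ i, ∫ x, ⟪x, b i⟫ ^ 2 ∂σ = 1 := by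
    rw [← integral_finsetSum _ fun i _ ↦ integrable_of_continuousOn_sphere hσ (by fun_prop)]
    have hnorm : ∀ᵐ x ∂σ, ∑ i, ⟪x, b i⟫ ^ 2 = 1 :=
      hσ.mono fun x hx ↦ by rw [b.sum_sq_inner_left, hx, one_pow]
    simp [integral_congr_ae hnorm]
  calc finrank ℝ E * ∫ x, ⟪x, u⟫ ^ 2 ∂σ
      = ∑ i, ‖b i‖ ^ 2 * ∫ x, ⟪x, u⟫ ^ 2 ∂σ := by simp
    _ = ∑ i, ‖u‖ ^ 2 * ∫ x, ⟪x, b i⟫ ^ 2 ∂σ := by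
      simp only [norm_pow_mul_integral_inner_pow hinv 2 u]
    _ = ‖u‖ ^ 2 := by rw [← Finset.mul_sum, hsum, mul_one]

theorem finrank_mul_integral_inner_map_self (hσ : ∀ᵐ x ∂σ, ‖x‖ = 1)
    (hinv : ∀ U : E ≃ₗᵢ[ℝ] E, σ.map U = σ) {S : E →ₗ[ℝ] E} (hS : S.IsSymmetric) :
    finrank ℝ E * ∫ x, ⟪x, S x⟫ ∂σ = LinearMap.trace ℝ E S := by
  simp only [inner_map_self_eq_sum_eigenvalues hS]
  rw [integral_finsetSum _ fun i _ ↦ integrable_of_continuousOn_sphere hσ (by fun_prop)]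
  simp only [integral_const_mul, Finset.mul_sum, mul_left_comm (finrank ℝ E : ℝ),
    finrank_mul_integral_inner_sq hσ hinv, OrthonormalBasis.norm_eq_one, one_pow, mul_one]
  rw [hS.trace_eq_sum_eigenvalues rfl]
  rfl

theorem exists_integral_inner_sq_mul_inner_sq (hσ : ∀ᵐ x ∂σ, ‖x‖ = 1)
    (hinv : ∀ U : E ≃ₗᵢ[ℝ] E, σ.map U = σ) :
    ∃ c : ℝ, ∀ u v : E,
      ∫ x, ⟪x, u⟫ ^ 2 * ⟪x, v⟫ ^ 2 ∂σ = c * (‖u‖ ^ 2 * ‖v‖ ^ 2 + 2 * ⟪u, v⟫ ^ 2) := by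
  obtain ⟨e, he⟩ := hσ.exists
  set a := ∫ x, ⟪x, e⟫ ^ 4 ∂σ
  have hmoment (w : E) : ∫ x, ⟪x, w⟫ ^ 4 ∂σ = a * (‖w‖ ^ 2) ^ 2 := by
    have := norm_pow_mul_integral_inner_pow hinv 4 w e
    rw [he] at this
    linear_combination this
  have hint {g : E → ℝ} (hg : Continuous g) : Integrable g σ :=
    integrable_of_continuousOn_sphere hσ hg.continuousOn
  refine ⟨a / 3, fun u v ↦ ?_⟩
  have hpolar (x : E) : ⟪x, u⟫ ^ 2 * ⟪x, v⟫ ^ 2 =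
      (1 / 12) * ((⟪x, u + v⟫ ^ 4 + ⟪x, u - v⟫ ^ 4) - 2 * (⟪x, u⟫ ^ 4 + ⟪x, v⟫ ^ 4)) := by
    rw [inner_add_right, inner_sub_right]; ring
  simp_rw [hpolar]
  rw [integral_const_mul, integral_sub (hint (by fun_prop)) (hint (by fun_prop)),
    integral_const_mul, integral_add (hint (by fun_prop)) (hint (by fun_prop)),
    integral_add (hint (by fun_prop)) (hint (by fun_prop)),
    hmoment, hmoment, hmoment, hmoment, norm_add_sq_real, norm_sub_sq_real]
  ring

theorem exists_integral_inner_sq_mul_inner_map (hσ : ∀ᵐ x ∂σ, ‖x‖ = 1)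
    (hinv : ∀ U : E ≃ₗᵢ[ℝ] E, σ.map U = σ) :
    ∃ c : ℝ, ∀ S : E →ₗ[ℝ] E, S.IsSymmetric → ∀ u : E,
      ∫ x, ⟪x, u⟫ ^ 2 * ⟪x, S x⟫ ∂σ = c * (‖u‖ ^ 2 * LinearMap.trace ℝ E S + 2 * ⟪u, S u⟫) := by
  obtain ⟨c, hc⟩ := exists_integral_inner_sq_mul_inner_sq hσ hinv
  refine ⟨c, fun S hS u ↦ ?_⟩
  set b := hS.eigenvectorBasis rfl
  set l := hS.eigenvalues rfl
  calc ∫ x, ⟪x, u⟫ ^ 2 * ⟪x, S x⟫ ∂σ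
      = ∫ x, ∑ i, l i * (⟪x, u⟫ ^ 2 * ⟪x, b i⟫ ^ 2) ∂σ := by
        simp only [inner_map_self_eq_sum_eigenvalues hS, Finset.mul_sum, mul_left_comm, b, l]
    _ = ∑ i, l i * (c * (‖u‖ ^ 2 + 2 * ⟪u, b i⟫ ^ 2)) := by
        rw [integral_finsetSum _ fun i _ ↦ integrable_of_continuousOn_sphere hσ (by fun_prop)]
        simp only [integral_const_mul, hc, b.norm_eq_one, one_pow, mul_one]
    _ = c * (‖u‖ ^ 2 * ∑ i, l i + 2 * ∑ i, l i * ⟪u, b i⟫ ^ 2) := by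
        simp only [Finset.mul_sum, ← Finset.sum_add_distrib]
        exact Finset.sum_congr rfl fun i _ ↦ by ring
    _ = c * (‖u‖ ^ 2 * LinearMap.trace ℝ E S + 2 * ⟪u, S u⟫) := by
        rw [hS.trace_eq_sum_eigenvalues rfl, inner_map_self_eq_sum_eigenvalues hS]
        rfl

theorem finrank_mul_integral_inner_sq_mul_inner_map (hσ : ∀ᵐ x ∂σ, ‖x‖ = 1)
    (hinv : ∀ U : E ≃ₗᵢ[ℝ] E, σ.map U = σ) {S : E →ₗ[ℝ] E} (hS : S.IsSymmetric) (u : E) :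
    finrank ℝ E * (finrank ℝ E + 2) * ∫ x, ⟪x, u⟫ ^ 2 * ⟪x, S x⟫ ∂σ =
      ‖u‖ ^ 2 * LinearMap.trace ℝ E S + 2 * ⟪u, S u⟫ := by
  obtain ⟨c, hc⟩ := exists_integral_inner_sq_mul_inner_map hσ hinv
  obtain ⟨e, he⟩ := hσ.exists
  have hnormalize : finrank ℝ E * (c * (finrank ℝ E + 2)) = 1 := by
    have hid : ∫ x, ⟪x, e⟫ ^ 2 ∂σ = ∫ x, ⟪x, e⟫ ^ 2 * ⟪x, (LinearMap.id : E →ₗ[ℝ] E) x⟫ ∂σ :=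
      integral_congr_ae (hσ.mono fun x hx ↦ by simp [hx])
    have hmoment := finrank_mul_integral_inner_sq hσ hinv e
    rw [hid, hc _ LinearMap.IsSymmetric.id, LinearMap.trace_id, LinearMap.id_apply,
      real_inner_self_eq_norm_sq, he] at hmoment
    linear_combination hmoment
  rw [hc S hS]
  linear_combination (‖u‖ ^ 2 * LinearMap.trace ℝ E S + 2 * ⟪u, S u⟫) * hnormalize

end Moments

section DualKernel

variable {E : Type*} [NormedAddCommGroup E] [InnerProductSpace ℝ E]

/-- The field of symmetric operators dual to the quadratic forms `x ↦ ⟪x, S x⟫` on the unit sphere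
of `E`: integrating such a form against it returns the symmetric operator `S`, so it inverts the
linear part of the equation solved by `newtonStep`. -/
def dualKernel (x : E) : E →L[ℝ] E :=
  (finrank ℝ E * (finrank ℝ E + 2) / 2 : ℝ) • rankOne ℝ x x - (finrank ℝ E / 2 : ℝ) • 1

theorem continuous_dualKernel : Continuous (dualKernel : E → E →L[ℝ] E) := by
  have hrank : Continuous fun x : E ↦ rankOne ℝ x x :=
    (rankOne ℝ : E →L[ℝ] E →L⋆[ℝ] E →L[ℝ] E).continuous.clm_apply continuous_id
  unfold dualKernel
  fun_prop

theorem norm_dualKernel_le {x : E} (hx : ‖x‖ = 1) :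
    ‖dualKernel x‖ ≤ finrank ℝ E * (finrank ℝ E + 3) / 2 := by
  have hone : ‖(1 : E →L[ℝ] E)‖ ≤ 1 := ContinuousLinearMap.norm_id_le
  calc ‖dualKernel x‖
      ≤ finrank ℝ E * (finrank ℝ E + 2) / 2 * ‖rankOne ℝ x x‖
          + finrank ℝ E / 2 * ‖(1 : E →L[ℝ] E)‖ := by
        refine (norm_sub_le _ _).trans_eq ?_
        rw [norm_smul, norm_smul, Real.norm_of_nonneg (by positivity),
          Real.norm_of_nonneg (by positivity)]
    _ ≤ finrank ℝ E * (finrank ℝ E + 2) / 2 * (1 * 1) + finrank ℝ E / 2 * 1 := by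
        rw [InnerProductSpace.norm_rankOne, hx]
        gcongr
    _ = finrank ℝ E * (finrank ℝ E + 3) / 2 := by ring

theorem inner_dualKernel_left (x u v : E) :
    ⟪dualKernel x u, v⟫ =
      finrank ℝ E * (finrank ℝ E + 2) / 2 * (⟪x, u⟫ * ⟪x, v⟫) - finrank ℝ E / 2 * ⟪u, v⟫ := by
  simp [dualKernel, inner_sub_left, real_inner_smul_left]

variable [MeasurableSpace E] {σ : Measure E} {g : E → ℝ}

theorem norm_integral_smul_dualKernel_le [IsProbabilityMeasure σ] (hσ : ∀ᵐ x ∂σ, ‖x‖ = 1) {c : ℝ}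
    (hg : ∀ x, ‖x‖ = 1 → |g x| ≤ c) :
    ‖∫ x, g x • dualKernel x ∂σ‖ ≤ c * (finrank ℝ E * (finrank ℝ E + 3) / 2) := by
  have hbound : ∀ᵐ x ∂σ, ‖g x • dualKernel x‖ ≤ c * (finrank ℝ E * (finrank ℝ E + 3) / 2) := by
    refine hσ.mono fun x hx ↦ ?_
    rw [norm_smul, Real.norm_eq_abs]
    gcongr
    · exact (abs_nonneg _).trans (hg x hx)
    · exact hg x hx
    · exact norm_dualKernel_le hx
  simpa using norm_integral_le_of_norm_le_const hbound

variable [FiniteDimensional ℝ E]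

theorem inner_integral_smul_dualKernel (hg : Integrable (fun x ↦ g x • dualKernel x) σ) (u v : E) :
    ⟪(∫ x, g x • dualKernel x ∂σ) u, v⟫ = ∫ x, g x * ⟪dualKernel x u, v⟫ ∂σ := by
  have : CompleteSpace E := FiniteDimensional.complete ℝ E
  rw [ContinuousLinearMap.integral_apply hg, real_inner_comm,
    ← integral_inner (hg.apply_continuousLinearMap u)]
  simp only [smul_apply, real_inner_smul_right, real_inner_comm v]

theorem isSymmetric_integral_smul_dualKernel (hg : Integrable (fun x ↦ g x • dualKernel x) σ) :
    (∫ x, g x • dualKernel x ∂σ : E →L[ℝ] E).IsSymmetric := fun u v ↦ by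
  rw [ContinuousLinearMap.coe_coe, inner_integral_smul_dualKernel hg, real_inner_comm,
    inner_integral_smul_dualKernel hg]
  simp only [inner_dualKernel_left, real_inner_comm v u, mul_comm ⟪_, u⟫]

variable [BorelSpace E]

theorem integrable_smul_dualKernel [IsFiniteMeasure σ] (hσ : ∀ᵐ x ∂σ, ‖x‖ = 1)
    (hg : ContinuousOn g (sphere 0 1)) : Integrable (fun x ↦ g x • dualKernel x) σ :=
  integrable_of_continuousOn_sphere hσ (hg.smul continuous_dualKernel.continuousOn)

theorem integral_inner_map_self_smul_dualKernel [IsProbabilityMeasure σ] (hσ : ∀ᵐ x ∂σ, ‖x‖ = 1)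
    (hinv : ∀ U : E ≃ₗᵢ[ℝ] E, σ.map U = σ) {S : E →L[ℝ] E} (hS : (S : E →ₗ[ℝ] E).IsSymmetric) :
    ∫ x, ⟪x, S x⟫ • dualKernel x ∂σ = S := by
  have hint := integrable_smul_dualKernel (g := fun x ↦ ⟪x, S x⟫) hσ (by fun_prop)
  have hsymm := (isSymmetric_integral_smul_dualKernel hint).sub hS
  rw [← ContinuousLinearMap.coe_inj, ← sub_eq_zero]
  refine hsymm.inner_map_self_eq_zero.1 fun u ↦ ?_
  have hfourth := finrank_mul_integral_inner_sq_mul_inner_map hσ hinv hS u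
  have hsecond := finrank_mul_integral_inner_map_self hσ hinv hS
  have hexpand (x : E) : ⟪x, S x⟫ * ⟪dualKernel x u, u⟫ =
      finrank ℝ E * (finrank ℝ E + 2) / 2 * (⟪x, u⟫ ^ 2 * ⟪x, S x⟫) -
        finrank ℝ E / 2 * ‖u‖ ^ 2 * ⟪x, S x⟫ := by
    rw [inner_dualKernel_left, real_inner_self_eq_norm_sq]; ring
  have hquad : ⟪(∫ x, ⟪x, S x⟫ • dualKernel x ∂σ) u, u⟫ = ⟪S u, u⟫ := by
    rw [inner_integral_smul_dualKernel hint]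
    simp only [hexpand]
    rw [integral_sub (integrable_of_continuousOn_sphere hσ (by fun_prop))
      (integrable_of_continuousOn_sphere hσ (by fun_prop)), integral_const_mul, integral_const_mul,
      real_inner_comm]
    simp only [ContinuousLinearMap.coe_coe] at hfourth hsecond
    linear_combination hfourth / 2 - ‖u‖ ^ 2 / 2 * hsecond
  simp [inner_sub_left, hquad]

theorem finrank_add_two_mul_integral_mul_inner_sq [IsProbabilityMeasure σ]
    (hσ : ∀ᵐ x ∂σ, ‖x‖ = 1) (hg : ContinuousOn g (sphere 0 1))
    (hzero : ∫ x, g x • dualKernel x ∂σ = 0) (u : E) :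
    (finrank ℝ E + 2) * ∫ x, g x * ⟪x, u⟫ ^ 2 ∂σ = ‖u‖ ^ 2 * ∫ x, g x ∂σ := by
  obtain ⟨e, he⟩ := hσ.exists
  have hn : (finrank ℝ E : ℝ) ≠ 0 := by exact_mod_cast (finrank_pos_of_norm_eq_one he).ne'
  have hexpand (x : E) : g x * ⟪dualKernel x u, u⟫ =
      finrank ℝ E * (finrank ℝ E + 2) / 2 * (g x * ⟪x, u⟫ ^ 2) -
        finrank ℝ E / 2 * ‖u‖ ^ 2 * g x := by
    rw [inner_dualKernel_left, real_inner_self_eq_norm_sq]; ring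
  have hquad := inner_integral_smul_dualKernel (integrable_smul_dualKernel hσ hg) u u
  simp only [hzero, zero_apply, inner_zero_left, hexpand] at hquad
  rw [integral_sub (integrable_of_continuousOn_sphere hσ (by fun_prop))
    (integrable_of_continuousOn_sphere hσ (by fun_prop)), integral_const_mul,
    integral_const_mul] at hquad
  refine mul_left_cancel₀ hn ?_
  linear_combination -2 * hquad

theorem integral_mul_inner_sq_eq_zero [IsProbabilityMeasure σ] (hσ : ∀ᵐ x ∂σ, ‖x‖ = 1)
    (hg : ContinuousOn g (sphere 0 1)) (hzero : ∫ x, g x • dualKernel x ∂σ = 0) (u : E) :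
    ∫ x, g x * ⟪x, u⟫ ^ 2 ∂σ = 0 := by
  have hquad := finrank_add_two_mul_integral_mul_inner_sq hσ hg hzero
  have hmean : ∫ x, g x ∂σ = 0 := by
    let b := stdOrthonormalBasis ℝ E
    have hsum : ∑ i, ∫ x, g x * ⟪x, b i⟫ ^ 2 ∂σ = ∫ x, g x ∂σ := by
      rw [← integral_finsetSum _ fun i _ ↦ integrable_of_continuousOn_sphere hσ (by fun_prop)]
      refine integral_congr_ae (hσ.mono fun x hx ↦ ?_)
      simp only [← Finset.mul_sum, b.sum_sq_inner_left, hx, one_pow, mul_one]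
    have htrace : (finrank ℝ E + 2) * ∫ x, g x ∂σ = finrank ℝ E * ∫ x, g x ∂σ := by
      rw [← hsum, Finset.mul_sum]
      simp [hquad, hsum]
    linarith
  have hu := hquad u
  rw [hmean, mul_zero] at hu
  exact (mul_eq_zero.1 hu).resolve_left (by positivity)

theorem integral_mul_inner_map_self_eq_zero [IsProbabilityMeasure σ] (hσ : ∀ᵐ x ∂σ, ‖x‖ = 1)
    (hg : ContinuousOn g (sphere 0 1)) (hzero : ∫ x, g x • dualKernel x ∂σ = 0)
    {A : E →ₗ[ℝ] E} (hA : A.IsSymmetric) : ∫ x, g x * ⟪x, A x⟫ ∂σ = 0 := by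
  simp only [inner_map_self_eq_sum_eigenvalues hA, Finset.mul_sum, mul_left_comm (g _)]
  rw [integral_finsetSum _ fun i _ ↦ integrable_of_continuousOn_sphere hσ (by fun_prop)]
  simp only [integral_const_mul, integral_mul_inner_sq_eq_zero hσ hg hzero, mul_zero,
    Finset.sum_const_zero]

end DualKernel

section NearIdentity

variable {E : Type*} [NormedAddCommGroup E] [NormedSpace ℝ E] {S : E →L[ℝ] E} {δ : ℝ}

theorem norm_apply_sub_le_of_mem_closedBall_one (hS : S ∈ closedBall 1 δ) (x : E) :
    ‖S x - x‖ ≤ δ * ‖x‖ := by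
  rw [mem_closedBall, dist_eq_norm] at hS
  calc ‖S x - x‖ = ‖(S - 1) x‖ := by simp
    _ ≤ ‖S - 1‖ * ‖x‖ := (S - 1).le_opNorm x
    _ ≤ δ * ‖x‖ := by gcongr

theorem apply_mem_closedBall_of_mem_closedBall_one (hS : S ∈ closedBall 1 δ) {x : E}
    (hx : ‖x‖ = 1) : S x ∈ closedBall x δ := by
  simpa [dist_eq_norm, hx] using norm_apply_sub_le_of_mem_closedBall_one hS x

theorem abs_norm_apply_sub_norm_le_of_mem_closedBall_one (hS : S ∈ closedBall 1 δ) (x : E) :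
    |‖S x‖ - ‖x‖| ≤ δ * ‖x‖ :=
  (abs_norm_sub_norm_le _ _).trans (norm_apply_sub_le_of_mem_closedBall_one hS x)

theorem injective_of_mem_closedBall_one (hδ : δ < 1) (hS : S ∈ closedBall 1 δ) :
    Injective S := by
  refine (injective_iff_map_eq_zero S).2 fun x hx ↦ norm_le_zero_iff.1 ?_
  have := norm_apply_sub_le_of_mem_closedBall_one hS x
  rw [hx, zero_sub, norm_neg] at this
  nlinarith [norm_nonneg x]

theorem closedBall_subset_preimage_of_mem_closedBall_one {K : Set E} {r R : ℝ} (hδ : 0 ≤ δ)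
    (hr : (1 + δ) * R ≤ r) (hS : S ∈ closedBall 1 δ) (hK : closedBall 0 r ⊆ K) :
    closedBall 0 R ⊆ S ⁻¹' K := fun x hx ↦ by
  rw [mem_closedBall_zero_iff] at hx
  have hSx := (abs_le.1 (abs_norm_apply_sub_norm_le_of_mem_closedBall_one hS x)).2
  exact hK (mem_closedBall_zero_iff.2 (by nlinarith))

theorem preimage_subset_closedBall_of_mem_closedBall_one {K : Set E} {r R : ℝ} (hδ : δ < 1)
    (hr : r ≤ (1 - δ) * R) (hS : S ∈ closedBall 1 δ) (hK : K ⊆ closedBall 0 r) :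
    S ⁻¹' K ⊆ closedBall 0 R := fun x hx ↦ by
  have hSx_le := mem_closedBall_zero_iff.1 (hK hx)
  have hSx := (abs_le.1 (abs_norm_apply_sub_norm_le_of_mem_closedBall_one hS x)).1
  rw [mem_closedBall_zero_iff]
  exact le_of_mul_le_mul_left (by linarith) (sub_pos.2 hδ)

end NearIdentity

section NewtonStep

variable {E : Type*} [NormedAddCommGroup E] [InnerProductSpace ℝ E]

/-- A step of the simplified Newton iteration for the equation `∫ x, (f (S x))⁻¹ * ⟪x, A x⟫ ∂σ =
∫ x, ⟪x, A x⟫ ∂σ` for all symmetric `A`, in the unknown operator `S`. When `f` is the norm, the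
derivative of `(f (S x))⁻¹` at `S = 1` is `-⟪x, S x⟫`, and `dualKernel` inverts it. -/
def newtonStep [MeasurableSpace E] (σ : Measure E) (f : E → ℝ) (S : E →L[ℝ] E) : E →L[ℝ] E :=
  ∫ x, (⟪x, S x⟫ + ((f (S x))⁻¹ - 1)) • dualKernel x ∂σ

variable {f : E → ℝ} {δ : ℝ}

theorem continuousOn_inv_comp_sphere [FiniteDimensional ℝ E] (hf : ConvexOn ℝ univ f)
    (hδ : δ ≤ 1 / 10) (hnorm : ∀ u, |f u - ‖u‖| ≤ δ ^ 2 * ‖u‖) {S : E →L[ℝ] E}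
    (hS : S ∈ closedBall 1 δ) : ContinuousOn (fun x ↦ (f (S x))⁻¹) (sphere 0 1) := by
  have hcont : Continuous f := hf.locallyLipschitz.continuous
  refine ContinuousOn.inv₀ (by fun_prop) fun x hx ↦ ?_
  have hx' := mem_sphere_zero_iff_norm.1 hx
  have hmem := apply_mem_closedBall_of_mem_closedBall_one hS hx'
  have := abs_le.1 (abs_sub_one_le_of_near_norm hδ hnorm hx' hmem)
  exact ne_of_gt (by linarith)

variable [FiniteDimensional ℝ E] [MeasurableSpace E] [BorelSpace E] {σ : Measure E}
  [IsProbabilityMeasure σ]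

theorem integrable_newtonStep (hf : ConvexOn ℝ univ f) (hδ : δ ≤ 1 / 10)
    (hnorm : ∀ u, |f u - ‖u‖| ≤ δ ^ 2 * ‖u‖) (hσ : ∀ᵐ x ∂σ, ‖x‖ = 1) {S : E →L[ℝ] E}
    (hS : S ∈ closedBall 1 δ) :
    Integrable (fun x ↦ (⟪x, S x⟫ + ((f (S x))⁻¹ - 1)) • dualKernel x) σ := by
  have hinv_cont := continuousOn_inv_comp_sphere hf hδ hnorm hS
  exact integrable_smul_dualKernel hσ (by fun_prop)

theorem lipschitzOnWith_newtonStep (hf : ConvexOn ℝ univ f) (hδ₀ : 0 < δ) (hδ : δ ≤ 1 / 10)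
    (hδ_dim : 24 * (finrank ℝ E * (finrank ℝ E + 3)) * δ ≤ 1)
    (hnorm : ∀ u, |f u - ‖u‖| ≤ δ ^ 2 * ‖u‖) (hσ : ∀ᵐ x ∂σ, ‖x‖ = 1) :
    LipschitzOnWith (1 / 2) (newtonStep σ f) (closedBall 1 δ) := by
  refine LipschitzOnWith.of_dist_le_mul fun S hS T hT ↦ ?_
  have hdiff : newtonStep σ f S - newtonStep σ f T =
      ∫ x, ((f (S x))⁻¹ - (f (T x))⁻¹ + ⟪x, S x - T x⟫) • dualKernel x ∂σ := by
    rw [newtonStep, newtonStep, ← integral_sub (integrable_newtonStep hf hδ hnorm hσ hS)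
      (integrable_newtonStep hf hδ hnorm hσ hT)]
    congr 1 with x : 1
    rw [← sub_smul, inner_sub_right]
    congr 1
    ring
  have hbound (x : E) (hx : ‖x‖ = 1) :
      |(f (S x))⁻¹ - (f (T x))⁻¹ + ⟪x, S x - T x⟫| ≤ 24 * δ * ‖S - T‖ := by
    refine (abs_inv_sub_inv_add_inner_le_of_near_norm hf hδ₀ hδ hnorm hx
      (apply_mem_closedBall_of_mem_closedBall_one hS hx)
      (apply_mem_closedBall_of_mem_closedBall_one hT hx)).trans ?_
    gcongr
    simpa [hx] using (S - T).le_opNorm x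
  rw [dist_eq_norm, dist_eq_norm, hdiff]
  calc ‖∫ x, ((f (S x))⁻¹ - (f (T x))⁻¹ + ⟪x, S x - T x⟫) • dualKernel x ∂σ‖
      ≤ 24 * δ * ‖S - T‖ * (finrank ℝ E * (finrank ℝ E + 3) / 2) :=
        norm_integral_smul_dualKernel_le hσ hbound
    _ = 24 * (finrank ℝ E * (finrank ℝ E + 3)) * δ * (1 / 2 * ‖S - T‖) := by ring
    _ ≤ 1 * (1 / 2 * ‖S - T‖) := by gcongr
    _ = (1 / 2 : ℝ≥0) * ‖S - T‖ := by rw [one_mul]; norm_num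

theorem dist_newtonStep_one_le (hf : ConvexOn ℝ univ f) (hδ₀ : 0 < δ) (hδ : δ ≤ 1 / 10)
    (hδ_dim : 24 * (finrank ℝ E * (finrank ℝ E + 3)) * δ ≤ 1)
    (hnorm : ∀ u, |f u - ‖u‖| ≤ δ ^ 2 * ‖u‖) (hσ : ∀ᵐ x ∂σ, ‖x‖ = 1)
    (hinv : ∀ U : E ≃ₗᵢ[ℝ] E, σ.map U = σ) : dist (newtonStep σ f 1) 1 ≤ δ / 2 := by
  have hone : (1 : E →L[ℝ] E) ∈ closedBall 1 δ := mem_closedBall_self hδ₀.le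
  have hdiff : newtonStep σ f 1 - 1 = ∫ x, ((f x)⁻¹ - 1) • dualKernel x ∂σ := by
    nth_rw 2 [← integral_inner_map_self_smul_dualKernel hσ hinv
      (S := (1 : E →L[ℝ] E)) LinearMap.IsSymmetric.id]
    rw [newtonStep, ← integral_sub (integrable_newtonStep hf hδ hnorm hσ hone)
      (integrable_smul_dualKernel hσ (by fun_prop))]
    congr 1 with x : 1
    rw [← sub_smul, add_sub_cancel_left]
    rfl
  have hbound (x : E) (hx : ‖x‖ = 1) : |(f x)⁻¹ - 1| ≤ 2 * δ ^ 2 := by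
    have hfx := hnorm x
    rw [hx, mul_one] at hfx
    have hpos : 1 / 2 ≤ f x * 1 := by nlinarith [(abs_le.1 hfx).1]
    simpa using (abs_inv_sub_inv_add_le (d := 0) hpos).trans (by simpa using hfx)
  rw [dist_eq_norm, hdiff]
  calc ‖∫ x, ((f x)⁻¹ - 1) • dualKernel x ∂σ‖
      ≤ 2 * δ ^ 2 * (finrank ℝ E * (finrank ℝ E + 3) / 2) :=
        norm_integral_smul_dualKernel_le hσ hbound
    _ = 24 * (finrank ℝ E * (finrank ℝ E + 3)) * δ * (δ / 24) := by ring
    _ ≤ 1 * (δ / 24) := by gcongr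
    _ ≤ δ / 2 := by linarith

theorem integral_sub_one_smul_dualKernel_eq_zero_of_isFixedPt (hf : ConvexOn ℝ univ f)
    (hδ : δ ≤ 1 / 10) (hnorm : ∀ u, |f u - ‖u‖| ≤ δ ^ 2 * ‖u‖) (hσ : ∀ᵐ x ∂σ, ‖x‖ = 1)
    (hinv : ∀ U : E ≃ₗᵢ[ℝ] E, σ.map U = σ) {S : E →L[ℝ] E} (hS : S ∈ closedBall 1 δ)
    (hfix : IsFixedPt (newtonStep σ f) S) :
    ∫ x, ((f (S x))⁻¹ - 1) • dualKernel x ∂σ = 0 := by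
  have hsymm : (S : E →ₗ[ℝ] E).IsSymmetric := by
    rw [← hfix]
    exact isSymmetric_integral_smul_dualKernel (integrable_newtonStep hf hδ hnorm hσ hS)
  calc ∫ x, ((f (S x))⁻¹ - 1) • dualKernel x ∂σ
      = newtonStep σ f S - ∫ x, ⟪x, S x⟫ • dualKernel x ∂σ := by
        rw [newtonStep, ← integral_sub (integrable_newtonStep hf hδ hnorm hσ hS)
          (integrable_smul_dualKernel hσ (by fun_prop))]
        simp only [← sub_smul, add_sub_cancel_left]
    _ = 0 := by rw [hfix, integral_inner_map_self_smul_dualKernel hσ hinv hsymm, sub_self]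

theorem exists_mem_closedBall_one_integral_inv (hf : ConvexOn ℝ univ f) (hδ₀ : 0 < δ)
    (hδ : δ ≤ 1 / 10) (hδ_dim : 24 * (finrank ℝ E * (finrank ℝ E + 3)) * δ ≤ 1)
    (hnorm : ∀ u, |f u - ‖u‖| ≤ δ ^ 2 * ‖u‖) (hσ : ∀ᵐ x ∂σ, ‖x‖ = 1)
    (hinv : ∀ U : E ≃ₗᵢ[ℝ] E, σ.map U = σ) :
    ∃ S ∈ closedBall (1 : E →L[ℝ] E) δ, ∫ x, (f (S x))⁻¹ ∂σ = 1 ∧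
      ∀ A : E →ₗ[ℝ] E, A.IsSymmetric → LinearMap.trace ℝ E A = 0 →
        ∫ x, (f (S x))⁻¹ * ⟪x, A x⟫ ∂σ = 0 := by
  have : CompleteSpace E := FiniteDimensional.complete ℝ E
  obtain ⟨S, hS, hfix⟩ := exists_isFixedPt_mem_closedBall (k := 1 / 2) (by norm_num) hδ₀.le
    (lipschitzOnWith_newtonStep hf hδ₀ hδ hδ_dim hnorm hσ)
    ((dist_newtonStep_one_le hf hδ₀ hδ hδ_dim hnorm hσ hinv).trans_eq (by norm_num; ring))
  have hcont := continuousOn_inv_comp_sphere hf hδ hnorm hS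
  have hforms (A : E →ₗ[ℝ] E) (hA : A.IsSymmetric) :
      ∫ x, (f (S x))⁻¹ * ⟪x, A x⟫ ∂σ = ∫ x, ⟪x, A x⟫ ∂σ := by
    have hAc : Continuous A := A.continuous_of_finiteDimensional
    rw [← sub_eq_zero, ← integral_sub (integrable_of_continuousOn_sphere hσ (by fun_prop))
      (integrable_of_continuousOn_sphere hσ (by fun_prop))]
    simpa only [sub_mul, one_mul] using integral_mul_inner_map_self_eq_zero hσ (by fun_prop)
      (integral_sub_one_smul_dualKernel_eq_zero_of_isFixedPt hf hδ hnorm hσ hinv hS hfix) hA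
  refine ⟨S, hS, ?_, fun A hA htrace ↦ ?_⟩
  · have hid : ∀ᵐ x ∂σ, ⟪x, (LinearMap.id : E →ₗ[ℝ] E) x⟫ = 1 := hσ.mono fun x hx ↦ by simp [hx]
    calc ∫ x, (f (S x))⁻¹ ∂σ = ∫ x, (f (S x))⁻¹ * ⟪x, (LinearMap.id : E →ₗ[ℝ] E) x⟫ ∂σ :=
          integral_congr_ae (hid.mono fun x hx ↦ by simp only [hx, mul_one])
      _ = ∫ x, ⟪x, (LinearMap.id : E →ₗ[ℝ] E) x⟫ ∂σ := hforms _ LinearMap.IsSymmetric.id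
      _ = 1 := by rw [integral_congr_ae hid]; simp
  · obtain ⟨e, he⟩ := hσ.exists
    have hn : (finrank ℝ E : ℝ) ≠ 0 := by exact_mod_cast (finrank_pos_of_norm_eq_one he).ne'
    have hmoment := finrank_mul_integral_inner_map_self hσ hinv hA
    rw [hforms A hA]
    exact (mul_eq_zero.1 (hmoment.trans htrace)).resolve_left hn

end NewtonStep

section Gauge

theorem abs_gauge_sub_norm_le {V : Type*} [NormedAddCommGroup V] [NormedSpace ℝ V] {K : Set V}
    {η : ℝ} (hη₀ : 0 ≤ η) (hη : η ≤ 1 / 2) (hin : closedBall 0 (1 - η) ⊆ K)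
    (hout : K ⊆ closedBall 0 (1 + η)) (x : V) : |gauge K x - ‖x‖| ≤ 2 * η * ‖x‖ := by
  have habs : Absorbent ℝ K :=
    absorbent_nhds_zero (Filter.mem_of_superset (closedBall_mem_nhds 0 (by linarith)) hin)
  have hlower := le_gauge_of_subset_closedBall habs (by linarith) hout (x := x)
  have hupper := mul_gauge_le_norm (x := x) (ball_subset_closedBall.trans hin)
  rw [div_le_iff₀ (by linarith)] at hlower
  rw [abs_le]
  constructor <;> nlinarith [gauge_nonneg (s := K) x, norm_nonneg x]

theorem convexOn_gauge {V : Type*} [AddCommGroup V] [Module ℝ V] {K : Set V} (hK : Convex ℝ K)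
    (habs : Absorbent ℝ K) : ConvexOn ℝ univ (gauge K) :=
  ⟨convex_univ, fun x _ y _ a b ha hb _ ↦ by
    simpa only [gauge_smul_of_nonneg ha, gauge_smul_of_nonneg hb] using
      gauge_add_le hK habs (a • x) (b • y)⟩

variable {n : ℕ} {K : Set (Euc n)}

theorem radFn_eq_inv_gauge (hK : Convex ℝ K) (habs : Absorbent ℝ K) (x : Euc n) :
    radFn K x = (gauge K x)⁻¹ := by
  have hmem {t : ℝ} (ht : 0 ≤ t) (hlt : t * gauge K x < 1) : t • x ∈ K :=
    setOfPred_gauge_lt_one_subset_self hK habs.zero_mem habs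
      (by rwa [mem_ofPred, gauge_smul_of_nonneg ht])
  rcases (gauge_nonneg (s := K) x).eq_or_lt with hzero | hpos
  · -- `K` contains the ray through `x`, and both sides are the junk value `0`.
    have hray : Ici 0 ⊆ {t : ℝ | 0 ≤ t ∧ t • x ∈ K} := fun t ht ↦
      ⟨ht, hmem ht (by simp [← hzero])⟩
    have hunbdd : ¬BddAbove {t : ℝ | 0 ≤ t ∧ t • x ∈ K} := fun hbdd ↦
      not_bddAbove_Ici (0 : ℝ) (hbdd.mono hray)
    rw [radFn, Real.sSup_of_not_bddAbove hunbdd, ← hzero, inv_zero]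
  · refine csSup_eq_of_forall_le_of_forall_lt_exists_gt
      ⟨0, le_rfl, by simpa using habs.zero_mem⟩ ?_ fun w hw ↦ ?_
    · rintro t ⟨ht, htx⟩
      have := gauge_le_one_of_mem htx
      rw [gauge_smul_of_nonneg ht, smul_eq_mul] at this
      rwa [← one_div, le_div_iff₀ hpos]
    · obtain ⟨t, hwt, htg⟩ := exists_between (max_lt hw (inv_pos.2 hpos))
      have ht : 0 ≤ t := (le_max_right _ _).trans hwt.le
      exact ⟨t, ⟨ht, hmem ht (by rwa [← lt_div_iff₀ hpos, one_div])⟩,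
        (le_max_left _ _).trans_lt hwt⟩

theorem radFn_preimage (S : Euc n →ₗ[ℝ] Euc n) (x : Euc n) :
    radFn (S ⁻¹' K) x = radFn K (S x) := by
  simp only [radFn, mem_preimage, map_smul]

end Gauge

theorem exists_linear_image_no_second_harmonic_general (n : ℕ) :
    ∀ ε > (0 : ℝ), ∃ ε' > (0 : ℝ), ∀ K : Set (Euc n), Convex ℝ K →
      Metric.closedBall 0 (1 - ε') ⊆ K → K ⊆ Metric.closedBall 0 (1 + ε') →
      ∀ σ : Measure (Euc n), IsProbabilityMeasure σ →
        σ (Metric.sphere (0 : Euc n) 1)ᶜ = 0 →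
        (∀ U : Euc n ≃ₗᵢ[ℝ] Euc n, Measure.map (⇑U) σ = σ) →
        ∃ T : Euc n ≃ₗ[ℝ] Euc n,
          Metric.closedBall 0 (1 - ε) ⊆ ⇑T '' K ∧
          ⇑T '' K ⊆ Metric.closedBall 0 (1 + ε) ∧
          (∫ x, radFn (⇑T '' K) x ∂σ) = 1 ∧
          ∀ A : Euc n →ₗ[ℝ] Euc n, A.IsSymmetric → LinearMap.trace ℝ (Euc n) A = 0 →
            (∫ x, radFn (⇑T '' K) x * ⟪x, A x⟫ ∂σ) = 0 := by
  intro ε hε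
  obtain ⟨δ, hδ₀, hδ, hδε, hδ_dim⟩ : ∃ δ > 0, δ ≤ 1 / 10 ∧ 4 * δ ≤ ε ∧
      24 * (finrank ℝ (Euc n) * (finrank ℝ (Euc n) + 3)) * δ ≤ 1 := by
    obtain ⟨c, hc, hc_dim⟩ := exists_pos_mul_lt one_pos
      (24 * (finrank ℝ (Euc n) * (finrank ℝ (Euc n) + 3)) : ℝ)
    refine ⟨min c (min (1 / 10) (ε / 4)), by positivity, by simp, ?_, ?_⟩
    · linarith [min_le_right c (min (1 / 10) (ε / 4)), min_le_right (1 / 10) (ε / 4)]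
    · exact (mul_le_mul_of_nonneg_left (min_le_left c _) (by positivity)).trans hc_dim.le
  refine ⟨δ ^ 2 / 2, by positivity, fun K hK hin hout σ _ hσ hinv ↦ ?_⟩
  have habs : Absorbent ℝ K :=
    absorbent_nhds_zero (Filter.mem_of_superset (closedBall_mem_nhds 0 (by nlinarith)) hin)
  have hnorm (x : Euc n) : |gauge K x - ‖x‖| ≤ δ ^ 2 * ‖x‖ := by
    simpa [mul_div_cancel₀] using
      abs_gauge_sub_norm_le (by positivity) (by nlinarith) hin hout x
  have hσ' : ∀ᵐ x ∂σ, ‖x‖ = 1 :=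
    Filter.mem_of_superset (mem_ae_iff.2 hσ) fun _ ↦ mem_sphere_zero_iff_norm.1
  obtain ⟨S, hS, hmean, hforms⟩ := exists_mem_closedBall_one_integral_inv
    (convexOn_gauge hK habs) hδ₀ hδ hδ_dim hnorm hσ' hinv
  let L := LinearEquiv.ofInjectiveEndo S.toLinearMap
    (injective_of_mem_closedBall_one (by linarith) hS)
  have himage : L.symm '' K = S ⁻¹' K := L.symm.image_eq_preimage_symm K
  have hradFn (x : Euc n) : radFn (S ⁻¹' K) x = (gauge K (S x))⁻¹ :=
    (radFn_preimage S.toLinearMap x).trans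
      (radFn_eq_inv_gauge hK habs (S x))
  refine ⟨L.symm, ?_⟩
  simp only [himage, hradFn]
  exact ⟨closedBall_subset_preimage_of_mem_closedBall_one hδ₀.le (by nlinarith) hS hin,
    preimage_subset_closedBall_of_mem_closedBall_one (by linarith) (by nlinarith) hS hout,
    hmean, hforms⟩

/-- Lemma 4.1: given `ε > 0` there is `ε' > 0` such that every
origin-symmetric convex body `K` with `(1-ε')B³ ⊆ K ⊆ (1+ε')B³` has a linear image
`K' = TK` with `(1-ε)B³ ⊆ K' ⊆ (1+ε)B³` whose radial function has mean `1` and vanishing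
second spherical harmonic component (w.r.t. the rotation-invariant probability measure `σ`
on `S²`). -/
theorem exists_linear_image_no_second_harmonic :
    ∀ ε > (0 : ℝ), ∃ ε' > (0 : ℝ), ∀ K : Set (Euc 3), IsSymCB K →
      Metric.closedBall 0 (1 - ε') ⊆ K → K ⊆ Metric.closedBall 0 (1 + ε') →
      ∀ σ : Measure (Euc 3), IsProbabilityMeasure σ →
        σ (Metric.sphere (0 : Euc 3) 1)ᶜ = 0 →
        (∀ U : Euc 3 ≃ₗᵢ[ℝ] Euc 3, Measure.map (⇑U) σ = σ) →
        ∃ T : Euc 3 ≃ₗ[ℝ] Euc 3,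
          Metric.closedBall 0 (1 - ε) ⊆ ⇑T '' K ∧
          ⇑T '' K ⊆ Metric.closedBall 0 (1 + ε) ∧
          (∫ x, radFn (⇑T '' K) x ∂σ) = 1 ∧
          ∀ A : Euc 3 →ₗ[ℝ] Euc 3, A.IsSymmetric → LinearMap.trace ℝ (Euc 3) A = 0 →
            (∫ x, radFn (⇑T '' K) x * ⟪x, A x⟫ ∂σ) = 0 := by
  intro ε hε
  obtain ⟨ε', hε', h⟩ := exists_linear_image_no_second_harmonic_general 3 ε hε
  exact ⟨ε', hε', fun K hK ↦ h K hK.convex⟩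

end
end
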